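/- arXiv:2211.01916 — 2 statements merged into one kernel-verified Lean document; each statement's English description precedes it below -/
import Mathlib

section
/- Let P be a probability measure on ℝ^d, σ > 0, let p_σ be the density of the Gaussian perturbation of P with variance σ², and let P̃_σ(·|x) be the tilted conditional measure dP̃_σ(y|x) ∝ exp(−‖x−y‖²/(2σ²)) dP(y). Then: (1) for every x ∈ ℝ^d, ∇²log p_σ(x) = Var_{y∼P̃_σ(·|x)}(y/σ²) − I_d/σ², where Var denotes the covariance matrix; and (2) if moreover P admits a density p ∈ C²(ℝ^d) (with the integration by parts justified, e.g. p, ∇p, ∇²p integrable against the Gaussian kernel), then ∇²log p_σ(x) = E_{y∼P̃_σ(·|x)}[∇²log p(y)] + Var_{y∼P̃_σ(·|x)}(∇log p(y)). -/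
open MeasureTheory Real

noncomputable section

namespace DiffusionKL

/-- Euclidean space `ℝ^d`. -/
abbrev Vec (d : ℕ) := EuclideanSpace ℝ (Fin d)

/-- Density of the isotropic Gaussian `N(m, v·I_d)` on `ℝ^d`. -/
def gaussDensity (d : ℕ) (m : Vec d) (v : ℝ) (x : Vec d) : ℝ :=
  (2 * π * v) ^ (-(d : ℝ) / 2) * Real.exp (-‖x - m‖ ^ 2 / (2 * v))

/-- The isotropic Gaussian measure `N(m, v·I_d)` on `ℝ^d`. -/
def gaussMeasure (d : ℕ) (m : Vec d) (v : ℝ) : Measure (Vec d) :=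
  MeasureTheory.volume.withDensity (fun x => ENNReal.ofReal (gaussDensity d m v x))

/-- The standard Gaussian measure `γ_d = N(0, I_d)` on `ℝ^d`. -/
def stdGauss (d : ℕ) : Measure (Vec d) := gaussMeasure d 0 1

/-- Kullback-Leibler divergence `KL(μ ‖ ν) = ∫ log (dμ/dν) dμ`. -/
def KLdiv {d : ℕ} (μ ν : Measure (Vec d)) : ℝ :=
  ∫ x, Real.log ((μ.rnDeriv ν x).toReal) ∂μ

/-- `G_{t,s} = ∫_t^s g(u)² du`. -/
def Gvar (g : ℝ → ℝ) (t s : ℝ) : ℝ := ∫ u in t..s, (g u) ^ 2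

/-- `α_{t,s} = exp(−G_{t,s}/2)`. -/
def alphaF (g : ℝ → ℝ) (t s : ℝ) : ℝ := Real.exp (-(Gvar g t s) / 2)

/-- `σ_t² = 1 − exp(−G_t)`. -/
def sigmaSq (g : ℝ → ℝ) (t : ℝ) : ℝ := 1 - Real.exp (-(Gvar g 0 t))

/-- The law of the forward marginal `x_t = α_t X₀ + σ_t Z`, `X₀ ∼ P`, `Z ∼ N(0,I_d)` indep. -/
def forwardLaw (d : ℕ) (P : Measure (Vec d)) (g : ℝ → ℝ) (t : ℝ) : Measure (Vec d) :=
  Measure.map (fun q : Vec d × Vec d => alphaF g 0 t • q.1 + Real.sqrt (sigmaSq g t) • q.2)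
    (P.prod (stdGauss d))

/-- Explicit density of the forward marginal `p_t` (for `t > 0`). -/
def forwardDensity (d : ℕ) (P : Measure (Vec d)) (g : ℝ → ℝ) (t : ℝ) (x : Vec d) : ℝ :=
  (2 * π * sigmaSq g t) ^ (-(d : ℝ) / 2) *
    ∫ y, Real.exp (-‖x - alphaF g 0 t • y‖ ^ 2 / (2 * sigmaSq g t)) ∂P

/-- Score function `∇ log p` of a density `p`. -/
def scoreOf {d : ℕ} (p : Vec d → ℝ) (x : Vec d) : Vec d :=
  gradient (fun z => Real.log (p z)) x

/-- Score `∇ log p_t` of the forward marginal at time `t > 0`. -/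
def fwdScore (d : ℕ) (P : Measure (Vec d)) (g : ℝ → ℝ) (t : ℝ) : Vec d → Vec d :=
  scoreOf (forwardDensity d P g t)

/-- Underlying measure for the joint forward coupling: `ω = (X₀, Z, Z')`. -/
def coupleMeasure (d : ℕ) (P : Measure (Vec d)) : Measure (Vec d × Vec d × Vec d) :=
  P.prod ((stdGauss d).prod (stdGauss d))

/-- The forward process at time `t`: `x_t(ω) = α_t X₀ + σ_t Z`. -/
def xt (d : ℕ) (g : ℝ → ℝ) (t : ℝ) (ω : Vec d × Vec d × Vec d) : Vec d :=
  alphaF g 0 t • ω.1 + Real.sqrt (sigmaSq g t) • ω.2.1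

/-- The forward process at time `s ≥ t`, coupled with `x_t` by
`x_s = α_{t,s} x_t + √(1−α_{t,s}²) Z'`. -/
def xts (d : ℕ) (g : ℝ → ℝ) (t s : ℝ) (ω : Vec d × Vec d × Vec d) : Vec d :=
  alphaF g t s • xt d g t ω + Real.sqrt (1 - (alphaF g t s) ^ 2) • ω.2.2

/-- Law of a Markov chain after `n` steps, started at `init`, with transition kernels `κ`. -/
def chainLaw (d : ℕ) (init : Measure (Vec d)) (κ : ℕ → Vec d → Measure (Vec d)) :
    ℕ → Measure (Vec d)
  | 0 => init
  | k + 1 => (chainLaw d init κ k).bind (κ k)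

/-- One step of the exponential-integrator sampler:
`ŷ_{k+1} | ŷ_k = a ∼ N(e^{G_{N−k}/2}·a + 2(e^{G_{N−k}/2} − 1)·s(a,t_{N−k}), (e^{G_{N−k}} − 1)·I_d)`. -/
def EIstep (d N : ℕ) (tp : ℕ → ℝ) (g : ℝ → ℝ) (sc : Vec d → ℝ → Vec d) (k : ℕ) (a : Vec d) :
    Measure (Vec d) :=
  gaussMeasure d
    (Real.exp (Gvar g (tp (N - k - 1)) (tp (N - k)) / 2) • a +
      (2 * (Real.exp (Gvar g (tp (N - k - 1)) (tp (N - k)) / 2) - 1)) • sc a (tp (N - k)))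
    (Real.exp (Gvar g (tp (N - k - 1)) (tp (N - k))) - 1)

/-- One step of the Euler–Maruyama sampler:
`ŷ_{k+1} | ŷ_k = a ∼ N((1 + G_{N−k}/2)·a + G_{N−k}·s(a,t_{N−k}), G_{N−k}·I_d)`. -/
def EMstep (d N : ℕ) (tp : ℕ → ℝ) (g : ℝ → ℝ) (sc : Vec d → ℝ → Vec d) (k : ℕ) (a : Vec d) :
    Measure (Vec d) :=
  gaussMeasure d
    ((1 + Gvar g (tp (N - k - 1)) (tp (N - k)) / 2) • a +
      (Gvar g (tp (N - k - 1)) (tp (N - k))) • sc a (tp (N - k)))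
    (Gvar g (tp (N - k - 1)) (tp (N - k)))

/-- Terminal law of the exponential-integrator sampler started at `N(0,I_d)`. -/
def EIlaw (d N : ℕ) (tp : ℕ → ℝ) (g : ℝ → ℝ) (sc : Vec d → ℝ → Vec d) : Measure (Vec d) :=
  chainLaw d (stdGauss d) (EIstep d N tp g sc) N

/-- Terminal law of the Euler–Maruyama sampler started at `N(0,I_d)`. -/
def EMlaw (d N : ℕ) (tp : ℕ → ℝ) (g : ℝ → ℝ) (sc : Vec d → ℝ → Vec d) : Measure (Vec d) :=
  chainLaw d (stdGauss d) (EMstep d N tp g sc) N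

/-- The weighted L² score estimation error
`(1/G_T)·Σ_{k=1}^N G_k·E_{p_{t_k}} ‖∇log p_{t_k}(x) − s(x,t_k)‖²`. -/
def scoreErr (d N : ℕ) (P : Measure (Vec d)) (g : ℝ → ℝ) (tp : ℕ → ℝ)
    (sc : Vec d → ℝ → Vec d) : ℝ :=
  (1 / Gvar g 0 (tp N)) * ∑ k ∈ Finset.range N,
    Gvar g (tp k) (tp (k + 1)) *
      ∫ x, ‖fwdScore d P g (tp (k + 1)) x - sc x (tp (k + 1))‖ ^ 2
        ∂(forwardLaw d P g (tp (k + 1)))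

/-- Entry `(i,j)` of the Hessian matrix `∇²f(x)`. -/
def hessEntry {d : ℕ} (f : Vec d → ℝ) (x : Vec d) (i j : Fin d) : ℝ :=
  fderiv ℝ (fun y => fderiv ℝ f y (EuclideanSpace.single j 1)) x (EuclideanSpace.single i 1)

/-- Frobenius norm of the Hessian matrix `∇²f(x)`. -/
def hessFrob {d : ℕ} (f : Vec d → ℝ) (x : Vec d) : ℝ :=
  Real.sqrt (∑ i, ∑ j, (hessEntry f x i j) ^ 2)

/-- Density of the Gaussian perturbation `X + σZ`, `X ∼ P`, `Z ∼ N(0,I_d)`. -/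
def perturbDensity (d : ℕ) (P : Measure (Vec d)) (σ : ℝ) (x : Vec d) : ℝ :=
  (2 * π * σ ^ 2) ^ (-(d : ℝ) / 2) * ∫ y, Real.exp (-‖x - y‖ ^ 2 / (2 * σ ^ 2)) ∂P

/-- Density of `μY + σZ`, `Y ∼ P`, `Z ∼ N(0,I_d)`. -/
def perturbDensity' (d : ℕ) (P : Measure (Vec d)) (μ σ : ℝ) (x : Vec d) : ℝ :=
  (2 * π * σ ^ 2) ^ (-(d : ℝ) / 2) * ∫ y, Real.exp (-‖x - μ • y‖ ^ 2 / (2 * σ ^ 2)) ∂P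

/-- Law of the Gaussian perturbation `X + σZ`. -/
def perturbLaw (d : ℕ) (P : Measure (Vec d)) (σ : ℝ) : Measure (Vec d) :=
  Measure.map (fun q : Vec d × Vec d => q.1 + σ • q.2)
    (P.prod (MeasureTheory.volume.withDensity
      (fun x : Vec d => ENNReal.ofReal ((2 * π) ^ (-(d : ℝ) / 2) * Real.exp (-‖x‖ ^ 2 / 2)))))

/-- The tilted conditional measure `dP̃_{μ,σ}(y|x) ∝ exp(−‖x−μy‖²/(2σ²)) dP(y)`. -/
def tiltMeasure (d : ℕ) (P : Measure (Vec d)) (μ σ : ℝ) (x : Vec d) : Measure (Vec d) :=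
  ((P.withDensity (fun y => ENNReal.ofReal (Real.exp (-‖x - μ • y‖ ^ 2 / (2 * σ ^ 2))))) Set.univ)⁻¹ •
    P.withDensity (fun y => ENNReal.ofReal (Real.exp (-‖x - μ • y‖ ^ 2 / (2 * σ ^ 2))))

/-- Sub-exponential (ψ₁-Orlicz) norm of `f` under the measure `μ`. -/
def psi1Norm {α : Type*} [MeasurableSpace α] (μ : Measure α) (f : α → ℝ) : ℝ :=
  sInf {t : ℝ | 0 < t ∧ ∫ x, Real.exp (|f x| / t) ∂μ ≤ 2}

/-- Sub-Gaussian (ψ₂-Orlicz) norm of `f` under the measure `μ`. -/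
def psi2Norm {α : Type*} [MeasurableSpace α] (μ : Measure α) (f : α → ℝ) : ℝ :=
  sInf {t : ℝ | 0 < t ∧ ∫ x, Real.exp ((f x) ^ 2 / t ^ 2) ∂μ ≤ 2}



/-- Gaussian kernel. -/
def gk {d : ℕ} (σ : ℝ) (u : Vec d) : ℝ := Real.exp (-‖u‖ ^ 2 / (2 * σ ^ 2))

/-- First partial derivative of the Gaussian kernel. -/
def gk1 {d : ℕ} (σ : ℝ) (j : Fin d) (u : Vec d) : ℝ := -(u j / σ ^ 2) * gk σ u

/-- Second partial derivative of the Gaussian kernel. -/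
def gk2 {d : ℕ} (σ : ℝ) (i j : Fin d) (u : Vec d) : ℝ :=
  (u i / σ ^ 2 * (u j / σ ^ 2) - (if i = j then 1 else 0) / σ ^ 2) * gk σ u

lemma gk_pos {d : ℕ} (σ : ℝ) (u : Vec d) : 0 < gk σ u := Real.exp_pos _

lemma gk_le_one {d : ℕ} (σ : ℝ) (u : Vec d) : gk σ u ≤ 1 := by
  unfold gk
  rw [Real.exp_le_one_iff, neg_div]
  have : 0 ≤ ‖u‖ ^ 2 / (2 * σ ^ 2) := by positivity
  linarith

lemma gk_sq_le {d : ℕ} {σ : ℝ} (hσ : 0 < σ) (u : Vec d) : ‖u‖ ^ 2 * gk σ u ≤ 2 * σ ^ 2 := by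
  unfold gk
  have h1 := Real.add_one_le_exp (‖u‖ ^ 2 / (2 * σ ^ 2))
  rw [neg_div, Real.exp_neg, ← div_eq_mul_inv, div_le_iff₀ (Real.exp_pos _)]
  have h2 : ‖u‖ ^ 2 = 2 * σ ^ 2 * (‖u‖ ^ 2 / (2 * σ ^ 2)) := by field_simp
  have h3 : 0 < 2 * σ ^ 2 := by positivity
  nlinarith

lemma gk_norm_le {d : ℕ} {σ : ℝ} (hσ : 0 < σ) (u : Vec d) :
    ‖u‖ * gk σ u ≤ 1 + 2 * σ ^ 2 := by
  have h1 := gk_sq_le hσ u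
  have h2 := gk_le_one σ u
  have h3 := gk_pos σ u
  nlinarith [sq_nonneg (‖u‖ - 1)]

lemma gk_hasFDerivAt {d : ℕ} {σ : ℝ} (hσ : 0 < σ) (u : Vec d) :
    HasFDerivAt (gk σ) ((-(1 / σ ^ 2) * gk σ u) • innerSL ℝ u) u := by
  have h := ((((hasFDerivAt_id u).norm_sq).neg).const_mul (1 / (2 * σ ^ 2))).exp
  have e : gk (d := d) σ = fun x => Real.exp (1 / (2 * σ ^ 2) * -‖id x‖ ^ 2) := by
    funext x
    unfold gk
    congr 1
    simp only [id]
    ring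
  rw [e]
  refine HasFDerivAt.congr_fderiv h ?_
  ext v
  simp
  field_simp

lemma gk_contDiff {d : ℕ} (σ : ℝ) : ContDiff ℝ 2 (gk (d := d) σ) := by
  unfold gk
  have : ContDiff ℝ 2 (fun u : Vec d => ‖u‖ ^ 2) := contDiff_norm_sq ℝ
  fun_prop

lemma gk_continuous {d : ℕ} (σ : ℝ) : Continuous (gk (d := d) σ) := (gk_contDiff σ).continuous

lemma gk1_contDiff {d : ℕ} (σ : ℝ) (j : Fin d) : ContDiff ℝ 2 (gk1 (d := d) σ j) := by
  unfold gk1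
  have := gk_contDiff (d := d) σ
  have h2 : ContDiff ℝ 2 (fun u : Vec d => u j) := (EuclideanSpace.proj (𝕜 := ℝ) j).contDiff
  fun_prop

lemma gk1_continuous {d : ℕ} (σ : ℝ) (j : Fin d) : Continuous (gk1 (d := d) σ j) :=
  (gk1_contDiff σ j).continuous

lemma gk2_continuous {d : ℕ} (σ : ℝ) (i j : Fin d) : Continuous (gk2 (d := d) σ i j) := by
  unfold gk2
  have := gk_continuous (d := d) σ
  fun_prop

lemma gk_fderiv {d : ℕ} {σ : ℝ} (hσ : 0 < σ) (u : Vec d) (j : Fin d) :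
    fderiv ℝ (gk σ) u (EuclideanSpace.single j 1) = gk1 σ j u := by
  rw [(gk_hasFDerivAt hσ u).fderiv]
  simp [gk1, EuclideanSpace.inner_single_right]
  ring

lemma gk1_hasFDerivAt {d : ℕ} {σ : ℝ} (hσ : 0 < σ) (u : Vec d) (i : Fin d) :
    HasFDerivAt (gk1 σ i) ((-(u i / σ ^ 2)) • ((-(1 / σ ^ 2) * gk σ u) • innerSL ℝ u) +
      (gk σ u) • (-(1 / σ ^ 2)) • EuclideanSpace.proj (𝕜 := ℝ) i) u := by
  have h2 : HasFDerivAt (fun u : Vec d => -(u i / σ ^ 2))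
      ((-(1 / σ ^ 2)) • EuclideanSpace.proj (𝕜 := ℝ) i) u := by
    have := ((EuclideanSpace.proj (𝕜 := ℝ) (ι := Fin d) i).hasFDerivAt (x := u)).const_smul
      (-(1 / σ ^ 2))
    refine this.congr_of_eventuallyEq (Filter.Eventually.of_forall fun y => ?_)
    simp
    ring
  exact h2.mul (gk_hasFDerivAt hσ u)

lemma gk1_fderiv {d : ℕ} {σ : ℝ} (hσ : 0 < σ) (u : Vec d) (i j : Fin d) :
    fderiv ℝ (gk1 σ i) u (EuclideanSpace.single j 1) = gk2 σ i j u := by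
  rw [(gk1_hasFDerivAt hσ u i).fderiv]
  simp [gk2, EuclideanSpace.inner_single_right]
  split_ifs <;> ring

lemma gk2_symm {d : ℕ} (σ : ℝ) (i j : Fin d) : gk2 (d := d) σ i j = gk2 σ j i := by
  funext u
  simp only [gk2, eq_comm (a := i) (b := j)]
  ring

lemma coord_le {d : ℕ} (u : Vec d) (i : Fin d) : |u i| ≤ ‖u‖ := by
  simpa using PiLp.norm_apply_le u i

lemma gk1_bdd {d : ℕ} {σ : ℝ} (hσ : 0 < σ) (i : Fin d) :
    ∃ C, ∀ u : Vec d, ‖gk1 σ i u‖ ≤ C := by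
  refine ⟨(1 + 2 * σ ^ 2) / σ ^ 2, fun u => ?_⟩
  have h0 := gk_pos σ u
  have h1 := gk_norm_le hσ u
  have h2 := coord_le u i
  rw [gk1, norm_mul, norm_neg, norm_div, Real.norm_eq_abs, Real.norm_eq_abs, Real.norm_eq_abs,
    abs_of_pos h0, abs_of_pos (by positivity : 0 < σ ^ 2), div_mul_eq_mul_div]
  gcongr
  nlinarith

lemma gk2_bdd {d : ℕ} {σ : ℝ} (hσ : 0 < σ) (i j : Fin d) :
    ∃ C, ∀ u : Vec d, ‖gk2 σ i j u‖ ≤ C := by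
  refine ⟨(2 * σ ^ 2) / σ ^ 2 / σ ^ 2 + 1 / σ ^ 2, fun u => ?_⟩
  have h0 := gk_pos σ u
  have h1 := gk_sq_le hσ u
  have h2 := coord_le u i
  have h3 := coord_le u j
  have e : gk2 σ i j u = (u i * u j * gk σ u) / σ ^ 2 / σ ^ 2
      - ((if i = j then 1 else 0) * gk σ u) / σ ^ 2 := by
    simp only [gk2]; ring
  rw [e]
  refine (norm_sub_le _ _).trans (add_le_add ?_ ?_)
  · rw [norm_div, norm_div, norm_mul, norm_mul, Real.norm_eq_abs, Real.norm_eq_abs,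
      Real.norm_eq_abs, Real.norm_eq_abs, abs_of_pos h0, abs_of_pos (by positivity : 0 < σ ^ 2)]
    refine div_le_div_of_nonneg_right (div_le_div_of_nonneg_right ?_ (by positivity)) (by positivity)
    refine le_trans ?_ h1
    rw [sq ‖u‖]
    gcongr
  · rw [norm_div, norm_mul, Real.norm_eq_abs, Real.norm_eq_abs,
      Real.norm_eq_abs, abs_of_pos h0, abs_of_pos (by positivity : 0 < σ ^ 2)]
    gcongr
    have := gk_le_one σ u
    split_ifs <;> simp [this]

lemma gk_fderiv_bdd {d : ℕ} {σ : ℝ} (hσ : 0 < σ) :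
    ∃ C, ∀ u : Vec d, ‖fderiv ℝ (gk σ) u‖ ≤ C := by
  refine ⟨(1 / σ ^ 2) * (1 + 2 * σ ^ 2), fun u => ?_⟩
  have h0 := gk_pos σ u
  have h1 := gk_norm_le hσ u
  rw [(gk_hasFDerivAt hσ u).fderiv, norm_smul, norm_mul, innerSL_apply_norm, norm_neg,
    Real.norm_eq_abs, Real.norm_eq_abs, abs_of_pos h0, abs_of_pos (by positivity), mul_assoc]
  gcongr
  linarith

lemma proj_norm_le {d : ℕ} (i : Fin d) :
    ‖(EuclideanSpace.proj (𝕜 := ℝ) i : Vec d →L[ℝ] ℝ)‖ ≤ 1 := by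
  refine ContinuousLinearMap.opNorm_le_bound _ zero_le_one fun u => ?_
  simpa using coord_le u i

lemma gk1_fderiv_bdd {d : ℕ} {σ : ℝ} (hσ : 0 < σ) (i : Fin d) :
    ∃ C, ∀ u : Vec d, ‖fderiv ℝ (gk1 σ i) u‖ ≤ C := by
  refine ⟨(2 * σ ^ 2) / σ ^ 2 / σ ^ 2 + 1 / σ ^ 2, fun u => ?_⟩
  have h0 := gk_pos σ u
  have h1 := gk_sq_le hσ u
  have h2 := coord_le u i
  have hs : 0 < σ ^ 2 := by positivity
  rw [(gk1_hasFDerivAt hσ u i).fderiv]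
  refine (norm_add_le _ _).trans (add_le_add ?_ ?_)
  · rw [norm_smul, norm_smul, norm_mul, innerSL_apply_norm, norm_neg, norm_neg,
      Real.norm_eq_abs, Real.norm_eq_abs, Real.norm_eq_abs, abs_of_pos h0, abs_div, abs_div,
      abs_of_pos hs, abs_one]
    calc |u i| / σ ^ 2 * (1 / σ ^ 2 * gk σ u * ‖u‖) = (|u i| * ‖u‖ * gk σ u) / σ ^ 2 / σ ^ 2 := by
          ring
      _ ≤ (‖u‖ ^ 2 * gk σ u) / σ ^ 2 / σ ^ 2 := by rw [sq ‖u‖]; gcongr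
      _ ≤ _ := by gcongr
  · rw [norm_smul, norm_smul, norm_neg, Real.norm_eq_abs, Real.norm_eq_abs, abs_of_pos h0, abs_div,
      abs_one, abs_of_pos hs]
    have h4 := proj_norm_le i
    have h5 := gk_le_one σ u
    calc gk σ u * (1 / σ ^ 2 * ‖(EuclideanSpace.proj (𝕜 := ℝ) i : Vec d →L[ℝ] ℝ)‖)
        ≤ 1 * (1 / σ ^ 2 * 1) := by gcongr
      _ = _ := by ring

lemma integrable_of_bdd {d : ℕ} (P : Measure (Vec d)) [IsProbabilityMeasure P]
    {F : Vec d → ℝ} (hF : Continuous F) (hb : ∃ C, ∀ u, ‖F u‖ ≤ C) (x : Vec d) :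
    Integrable (fun y => F (x - y)) P := by
  obtain ⟨C, hC⟩ := hb
  exact Integrable.of_bound (by fun_prop) C (Filter.Eventually.of_forall fun y => hC _)

lemma conv_hasFDerivAt {d : ℕ} (P : Measure (Vec d)) [IsProbabilityMeasure P]
    {F : Vec d → ℝ} (hF : ContDiff ℝ 2 F) (hb : ∃ C, ∀ u, ‖F u‖ ≤ C)
    (hb' : ∃ C, ∀ u, ‖fderiv ℝ F u‖ ≤ C) (x : Vec d) :
    DifferentiableAt ℝ (fun x => ∫ y, F (x - y) ∂P) x ∧
    ∀ v, fderiv ℝ (fun x => ∫ y, F (x - y) ∂P) x v = ∫ y, fderiv ℝ F (x - y) v ∂P := by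
  obtain ⟨C', hC'⟩ := hb'
  have hc : Continuous F := hF.continuous
  have hd : Differentiable ℝ F := hF.differentiable (by norm_num)
  have hc' : Continuous (fderiv ℝ F) := hF.continuous_fderiv (by norm_num)
  have hm : AEStronglyMeasurable (fun y => fderiv ℝ F (x - y)) P :=
    (by fun_prop : Continuous fun y => fderiv ℝ F (x - y)).aestronglyMeasurable
  have key := hasFDerivAt_integral_of_dominated_of_fderiv_le (𝕜 := ℝ) (μ := P)
    (F := fun x y => F (x - y)) (F' := fun x y => fderiv ℝ F (x - y)) (x₀ := x)
    (bound := fun _ => C') (s := Set.univ) Filter.univ_mem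
    (Filter.Eventually.of_forall fun z =>
      (by fun_prop : Continuous fun y => F (z - y)).aestronglyMeasurable)
    (integrable_of_bdd P hc hb x) hm
    (Filter.Eventually.of_forall fun y z _ => hC' _) (integrable_const _)
    (Filter.Eventually.of_forall fun y z _ => by
      exact (hasFDerivAt_comp_sub (f := F) y).2 (hd _).hasFDerivAt)
  refine ⟨key.differentiableAt, fun v => ?_⟩
  rw [key.fderiv, ContinuousLinearMap.integral_apply]
  exact Integrable.of_bound hm C' (Filter.Eventually.of_forall fun y => hC' _)

lemma gk_bdd {d : ℕ} (σ : ℝ) : ∃ C, ∀ u : Vec d, ‖gk σ u‖ ≤ C :=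
  ⟨1, fun u => by rw [Real.norm_eq_abs, abs_of_pos (gk_pos σ u)]; exact gk_le_one σ u⟩

lemma N_pos {d : ℕ} (P : Measure (Vec d)) [IsProbabilityMeasure P] (σ : ℝ) (x : Vec d) :
    0 < ∫ y, gk σ (x - y) ∂P := by
  have hi := integrable_of_bdd P (gk_continuous σ) (gk_bdd σ) x
  rw [integral_pos_iff_support_of_nonneg (fun y => (gk_pos _ _).le) hi]
  have : Function.support (fun y => gk σ (x - y)) = Set.univ := by
    ext y; simp [(gk_pos σ (x - y)).ne']
  rw [this]; simp

lemma hess_log {d : ℕ} {N : Vec d → ℝ} {N1 : Vec d → ℝ} {a : ℝ} {n2 : ℝ} {c : ℝ}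
    (hc : c ≠ 0) {x : Vec d} {i j : Fin d}
    (hN : ∀ᶠ z in nhds x, N z ≠ 0) (hd : ∀ᶠ z in nhds x, DifferentiableAt ℝ N z)
    (h1 : ∀ᶠ z in nhds x, fderiv ℝ N z (EuclideanSpace.single j 1) = N1 z)
    (hi : fderiv ℝ N x (EuclideanSpace.single i 1) = a)
    (hd1 : DifferentiableAt ℝ N1 x)
    (h2 : fderiv ℝ N1 x (EuclideanSpace.single i 1) = n2) :
    hessEntry (fun z => Real.log (c * N z)) x i j = n2 / N x - a * N1 x / (N x) ^ 2 := by
  unfold hessEntry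
  have e : (fun z => fderiv ℝ (fun z => Real.log (c * N z)) z (EuclideanSpace.single j 1))
      =ᶠ[nhds x] fun z => N1 z / N z := by
    filter_upwards [hN, hd, h1] with z hz hdz h1z
    have := ((hdz.hasFDerivAt.const_mul c).log (mul_ne_zero hc hz))
    rw [this.fderiv]
    simp [h1z]
    field_simp
  rw [e.fderiv_eq]
  have hNx := hN.self_of_nhds
  have := hd1.hasFDerivAt.fun_mul
    ((hasDerivAt_inv hNx).comp_hasFDerivAt x hd.self_of_nhds.hasFDerivAt)
  simp only [Function.comp_apply, ← div_eq_mul_inv] at this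
  rw [this.fderiv]
  simp [h2, hi]
  field_simp
  ring

lemma hess_perturb {d : ℕ} (P : Measure (Vec d)) [IsProbabilityMeasure P] {σ : ℝ} (hσ : 0 < σ)
    (x : Vec d) (i j : Fin d) :
    hessEntry (fun z => Real.log (perturbDensity d P σ z)) x i j =
      (∫ y, gk2 σ i j (x - y) ∂P) / (∫ y, gk σ (x - y) ∂P) -
      (∫ y, gk1 σ i (x - y) ∂P) * (∫ y, gk1 σ j (x - y) ∂P) / (∫ y, gk σ (x - y) ∂P) ^ 2 := by
  have A := fun z => conv_hasFDerivAt P (gk_contDiff σ) (gk_bdd σ) (gk_fderiv_bdd hσ) z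
  have B := fun z => conv_hasFDerivAt P (gk1_contDiff σ j) (gk1_bdd hσ j) (gk1_fderiv_bdd hσ j) z
  refine hess_log (N := fun x => ∫ y, gk σ (x - y) ∂P) (N1 := fun x => ∫ y, gk1 σ j (x - y) ∂P)
    (c := (2 * π * σ ^ 2) ^ (-(d : ℝ) / 2)) ?_ ?_ ?_ ?_ ?_ ?_ ?_
  · have : 0 < 2 * π * σ ^ 2 := by positivity
    positivity
  · exact Filter.Eventually.of_forall fun z => (N_pos P σ z).ne'
  · exact Filter.Eventually.of_forall fun z => (A z).1
  · refine Filter.Eventually.of_forall fun z => ?_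
    rw [(A z).2]
    simp only [gk_fderiv hσ]
  · rw [(A x).2]
    simp only [gk_fderiv hσ]
  · exact (B x).1
  · rw [(B x).2]
    simp only [gk1_fderiv hσ]
    rw [gk2_symm]

lemma tilt_eq {d : ℕ} (P : Measure (Vec d)) (σ : ℝ) (x : Vec d) :
    tiltMeasure d P 1 σ x =
      ((P.withDensity (fun y => ENNReal.ofReal (gk σ (x - y)))) Set.univ)⁻¹ •
        P.withDensity (fun y => ENNReal.ofReal (gk σ (x - y))) := by
  simp [tiltMeasure, gk]

lemma tilt_mass {d : ℕ} (P : Measure (Vec d)) [IsProbabilityMeasure P] (σ : ℝ) (x : Vec d) :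
    (P.withDensity (fun y => ENNReal.ofReal (gk σ (x - y)))) Set.univ =
      ENNReal.ofReal (∫ y, gk σ (x - y) ∂P) := by
  rw [withDensity_apply _ MeasurableSet.univ, Measure.restrict_univ,
    ofReal_integral_eq_lintegral_ofReal (integrable_of_bdd P (gk_continuous σ) (gk_bdd σ) x)
    (Filter.Eventually.of_forall fun y => (gk_pos _ _).le)]

lemma gk_meas {d : ℕ} (σ : ℝ) (x : Vec d) :
    Measurable (fun y : Vec d => ENNReal.ofReal (gk σ (x - y))) := by
  have := gk_continuous (d := d) σ
  exact ENNReal.measurable_ofReal.comp (by fun_prop : Continuous fun y => gk σ (x - y)).measurable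

lemma tilt_integral {d : ℕ} (P : Measure (Vec d)) [IsProbabilityMeasure P] (σ : ℝ) (x : Vec d)
    (f : Vec d → ℝ) :
    ∫ y, f y ∂(tiltMeasure d P 1 σ x) =
      (∫ y, f y * gk σ (x - y) ∂P) / (∫ y, gk σ (x - y) ∂P) := by
  rw [tilt_eq, tilt_mass, integral_smul_measure,
    integral_withDensity_eq_integral_toReal_smul (gk_meas σ x) (by simp)]
  simp only [ENNReal.toReal_ofReal (gk_pos σ _).le, ENNReal.toReal_inv,
    ENNReal.toReal_ofReal (N_pos P σ x).le, smul_eq_mul]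
  rw [div_eq_inv_mul]
  congr 2
  funext y
  ring

lemma tilt_integrable {d : ℕ} (P : Measure (Vec d)) [IsProbabilityMeasure P] (σ : ℝ) (x : Vec d)
    (f : Vec d → ℝ) (h : Integrable f (tiltMeasure d P 1 σ x)) :
    Integrable (fun y => f y * gk σ (x - y)) P := by
  rw [tilt_eq, tilt_mass, integrable_smul_measure (by simp) (by simp [N_pos P σ x]),
    integrable_withDensity_iff_integrable_smul' (gk_meas σ x) (by simp)] at h
  simpa only [ENNReal.toReal_ofReal (gk_pos σ _).le, smul_eq_mul, mul_comm] using h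

lemma part1 {d : ℕ} (P : Measure (Vec d)) [IsProbabilityMeasure P] {σ : ℝ} (hσ : 0 < σ)
    (x : Vec d) (i j : Fin d) :
    hessEntry (fun z => Real.log (perturbDensity d P σ z)) x i j =
          ((∫ y, (y i / σ ^ 2) * (y j / σ ^ 2) ∂(tiltMeasure d P 1 σ x)) -
              (∫ y, y i / σ ^ 2 ∂(tiltMeasure d P 1 σ x)) *
                (∫ y, y j / σ ^ 2 ∂(tiltMeasure d P 1 σ x))) -
            (if i = j then 1 else 0) / σ ^ 2 := by
  have i0 := integrable_of_bdd P (gk_continuous σ) (gk_bdd σ) x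
  have i1 := fun j => integrable_of_bdd P (gk1_continuous σ j) (gk1_bdd hσ j) x
  have i2 := integrable_of_bdd P (gk2_continuous σ i j) (gk2_bdd hσ i j) x
  have hN := N_pos P σ x
  have e1 : ∀ j, ∫ y, y j / σ ^ 2 * gk σ (x - y) ∂P =
      (∫ y, gk1 σ j (x - y) ∂P) + (x j / σ ^ 2) * ∫ y, gk σ (x - y) ∂P := by
    intro j
    rw [← integral_const_mul, ← integral_add (i1 j) (i0.const_mul _)]
    congr 1
    funext y
    simp only [gk1, PiLp.sub_apply]
    ring
  have e2 : ∫ y, y i / σ ^ 2 * (y j / σ ^ 2) * gk σ (x - y) ∂P =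
      (∫ y, gk2 σ i j (x - y) ∂P) + (((x i / σ ^ 2) * ∫ y, gk1 σ j (x - y) ∂P) +
      (((x j / σ ^ 2) * ∫ y, gk1 σ i (x - y) ∂P) +
      ((if i = j then 1 else 0) / σ ^ 2 + x i / σ ^ 2 * (x j / σ ^ 2)) *
        ∫ y, gk σ (x - y) ∂P)) := by
    rw [← integral_const_mul, ← integral_const_mul, ← integral_const_mul,
      ← integral_add ((i1 _).const_mul _) (i0.const_mul _),
      ← integral_add ((i1 _).const_mul _) (((i1 _).const_mul _).fun_add (i0.const_mul _)),
      ← integral_add i2 (((i1 _).const_mul _).fun_add (((i1 _).const_mul _).fun_add (i0.const_mul _)))]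
    congr 1
    funext y
    simp only [gk1, gk2, PiLp.sub_apply]
    ring
  rw [hess_perturb P hσ, tilt_integral, tilt_integral, tilt_integral, e1, e1, e2]
  generalize (∫ y, gk σ (x - y) ∂P) = N at *
  field_simp
  ring
/-- Smooth cutoff of the positive half line. -/
def cutF (n : ℕ) (t : ℝ) : ℝ := Real.smoothTransition (n * t - 1)

/-- Derivative of the cutoff. -/
def cutD (n : ℕ) (t : ℝ) : ℝ := deriv Real.smoothTransition (n * t - 1) * n

lemma st_contDiff : ContDiff ℝ 1 Real.smoothTransition :=
  Real.smoothTransition.contDiff (n := 1)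

lemma cutF_hasDerivAt (n : ℕ) (t : ℝ) : HasDerivAt (cutF n) (cutD n t) t := by
  have h1 : HasDerivAt (fun t : ℝ => (n : ℝ) * t - 1) n t := by
    simpa using ((hasDerivAt_id t).const_mul (n : ℝ)).sub_const 1
  have h2 : HasDerivAt Real.smoothTransition (deriv Real.smoothTransition (n * t - 1))
      ((n : ℝ) * t - 1) := ((st_contDiff.differentiable (by norm_num)) _).hasDerivAt
  exact h2.comp t h1

lemma cutF_continuous (n : ℕ) : Continuous (cutF n) :=
  continuous_iff_continuousAt.2 fun t => (cutF_hasDerivAt n t).continuousAt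

lemma cutD_continuous (n : ℕ) : Continuous (cutD n) := by
  have : Continuous (deriv Real.smoothTransition) := st_contDiff.continuous_deriv (by norm_num)
  unfold cutD
  fun_prop

lemma st_deriv_neg {v : ℝ} (hv : v < 0) : deriv Real.smoothTransition v = 0 := by
  have : Real.smoothTransition =ᶠ[nhds v] fun _ => 0 := by
    filter_upwards [gt_mem_nhds hv] with w hw
    exact Real.smoothTransition.zero_of_nonpos hw.le
  rw [this.deriv_eq]; simp

lemma st_deriv_gt {v : ℝ} (hv : 1 < v) : deriv Real.smoothTransition v = 0 := by
  have : Real.smoothTransition =ᶠ[nhds v] fun _ => 1 := by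
    filter_upwards [lt_mem_nhds hv] with w hw
    exact Real.smoothTransition.one_of_one_le hw.le
  rw [this.deriv_eq]; simp

lemma cutF_nonpos (n : ℕ) {t : ℝ} (ht : t ≤ 0) : cutF n t = 0 := by
  apply Real.smoothTransition.zero_of_nonpos
  have : (n : ℝ) * t ≤ 0 := mul_nonpos_of_nonneg_of_nonpos (Nat.cast_nonneg n) ht
  linarith

lemma cutD_nonpos (n : ℕ) {t : ℝ} (ht : t ≤ 0) : cutD n t = 0 := by
  have : (n : ℝ) * t ≤ 0 := mul_nonpos_of_nonneg_of_nonpos (Nat.cast_nonneg n) ht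
  rw [cutD, st_deriv_neg (by linarith), zero_mul]

lemma cutF_abs_le (n : ℕ) (t : ℝ) : |cutF n t| ≤ 1 := by
  rw [cutF, abs_of_nonneg (Real.smoothTransition.nonneg _)]
  exact Real.smoothTransition.le_one _

lemma cutD_bdd : ∃ C : ℝ, 0 ≤ C ∧ ∀ (n : ℕ) (t : ℝ), 0 < t → |cutD n t| ≤ C / t := by
  have hc : Continuous (deriv Real.smoothTransition) := st_contDiff.continuous_deriv (by norm_num)
  obtain ⟨C, hC⟩ := (isCompact_Icc (a := (0 : ℝ)) (b := 1)).exists_bound_of_continuousOn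
    hc.continuousOn
  have hC0 : 0 ≤ C := (norm_nonneg _).trans (hC 0 (by simp))
  refine ⟨2 * C, by positivity, fun n t ht => ?_⟩
  rw [le_div_iff₀ ht, cutD, abs_mul, Nat.abs_cast]
  by_cases h0 : (n : ℝ) * t - 1 < 0
  · rw [st_deriv_neg h0]; simp [hC0]
  by_cases h1 : 1 < (n : ℝ) * t - 1
  · rw [st_deriv_gt h1]; simp [hC0]
  push Not at h0 h1
  have := hC _ ⟨h0, h1⟩
  rw [Real.norm_eq_abs] at this
  nlinarith [abs_nonneg (deriv Real.smoothTransition (n * t - 1))]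

lemma cut_eventually {t : ℝ} (ht : 0 < t) :
    ∀ᶠ n : ℕ in Filter.atTop, cutF n t = 1 ∧ cutD n t = 0 := by
  obtain ⟨N, hN⟩ := exists_nat_gt (2 / t)
  filter_upwards [Filter.eventually_ge_atTop N] with n hn
  have h1 : (N : ℝ) ≤ n := by exact_mod_cast hn
  have h2 : 2 < (n : ℝ) * t := by
    rw [div_lt_iff₀ ht] at hN
    nlinarith
  constructor
  · exact Real.smoothTransition.one_of_one_le (by linarith)
  · rw [cutD, st_deriv_gt (by linarith), zero_mul]

lemma ibp {d : ℕ} {K p q : Vec d → ℝ} (hK : ContDiff ℝ 2 K) (hp : ContDiff ℝ 1 p)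
    (hq : ContDiff ℝ 1 q) (x e : Vec d)
    (h1 : IntegrableOn (fun y => K (x - y) * q y) {y | 0 < p y})
    (h2 : IntegrableOn (fun y => fderiv ℝ K (x - y) e * q y) {y | 0 < p y})
    (h3 : IntegrableOn (fun y => K (x - y) * fderiv ℝ q y e) {y | 0 < p y})
    (h4 : IntegrableOn (fun y => K (x - y) * (q y * fderiv ℝ p y e / p y)) {y | 0 < p y}) :
    ∫ y in {y | 0 < p y}, fderiv ℝ K (x - y) e * q y =
      ∫ y in {y | 0 < p y}, K (x - y) * fderiv ℝ q y e := by
  set S := {y | 0 < p y} with hS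
  have hSm : MeasurableSet S := (isOpen_lt continuous_const hp.continuous).measurableSet
  have cK := hK.continuous
  have cK' : Continuous (fun u => fderiv ℝ K u e) :=
    (hK.continuous_fderiv (by norm_num)).clm_apply continuous_const
  have cp := hp.continuous
  have cp' : Continuous (fun u => fderiv ℝ p u e) :=
    (hp.continuous_fderiv (by norm_num)).clm_apply continuous_const
  have cq := hq.continuous
  have cq' : Continuous (fun u => fderiv ℝ q u e) :=
    (hq.continuous_fderiv (by norm_num)).clm_apply continuous_const
  have cF := cutF_continuous
  have cD := cutD_continuous
  have dK : Differentiable ℝ K := hK.differentiable (by norm_num)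
  have dp : Differentiable ℝ p := hp.differentiable (by norm_num)
  have dq : Differentiable ℝ q := hq.differentiable (by norm_num)
  obtain ⟨C, hC0, hC⟩ := cutD_bdd
  have hk : ∀ y, HasFDerivAt (fun y => K (x - y)) (-(fderiv ℝ K (x - y))) y := by
    intro y
    have h := (dK (x - y)).hasFDerivAt.comp y ((hasFDerivAt_id y).const_sub x)
    refine h.congr_fderiv ?_
    ext v
    simp
  have hw : ∀ n y, HasFDerivAt (fun y => cutF n (p y) * q y)
      (cutF n (p y) • fderiv ℝ q y + q y • (cutD n (p y) • fderiv ℝ p y)) y := by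
    intro n y
    have h := (cutF_hasDerivAt n (p y)).comp_hasFDerivAt y (dp y).hasFDerivAt
    exact h.fun_mul (dq y).hasFDerivAt
  -- the two integrands
  set A : ℕ → Vec d → ℝ := fun n y => fderiv ℝ K (x - y) e * (cutF n (p y) * q y) with hA
  set B : ℕ → Vec d → ℝ := fun n y => K (x - y) *
    (cutF n (p y) * fderiv ℝ q y e + q y * (cutD n (p y) * fderiv ℝ p y e)) with hB
  have cA : ∀ n, Continuous (A n) := fun n => by
    have := cF n
    simp only [hA]; fun_prop
  have cB : ∀ n, Continuous (B n) := fun n => by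
    have := cF n
    have := cD n
    simp only [hB]; fun_prop
  have bA : ∀ n, ∀ y ∈ S, ‖A n y‖ ≤ ‖fderiv ℝ K (x - y) e * q y‖ := by
    intro n y _
    have := cutF_abs_le n (p y)
    simp only [hA, norm_mul, Real.norm_eq_abs]
    gcongr
    nlinarith [abs_nonneg (q y)]
  have bB : ∀ n, ∀ y ∈ S, ‖B n y‖ ≤ ‖K (x - y) * fderiv ℝ q y e‖ +
      C * ‖K (x - y) * (q y * fderiv ℝ p y e / p y)‖ := by
    intro n y hy
    have hy' : 0 < p y := hy
    have f1 := cutF_abs_le n (p y)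
    have f2 := hC n (p y) hy'
    simp only [hB, mul_add]
    refine (norm_add_le _ _).trans (add_le_add ?_ ?_)
    · simp only [norm_mul, Real.norm_eq_abs]
      gcongr
      nlinarith [abs_nonneg (fderiv ℝ q y e)]
    · simp only [norm_mul, norm_div, Real.norm_eq_abs, abs_of_pos hy']
      calc |K (x - y)| * (|q y| * (|cutD n (p y)| * |fderiv ℝ p y e|))
          ≤ |K (x - y)| * (|q y| * (C / p y * |fderiv ℝ p y e|)) := by gcongr
        _ = _ := by ring
  have iA : ∀ n, IntegrableOn (A n) S := fun n =>
    h2.norm.mono' (cA n).aestronglyMeasurable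
      ((ae_restrict_iff' hSm).2 (Filter.Eventually.of_forall fun y hy => bA n y hy))
  have ibd : IntegrableOn (fun y => ‖K (x - y) * fderiv ℝ q y e‖ +
      C * ‖K (x - y) * (q y * fderiv ℝ p y e / p y)‖) S := h3.norm.fun_add (h4.norm.const_mul C)
  have iB : ∀ n, IntegrableOn (B n) S := fun n =>
    ibd.mono' (cB n).aestronglyMeasurable
      ((ae_restrict_iff' hSm).2 (Filter.Eventually.of_forall fun y hy => bB n y hy))
  have zA : ∀ n, ∀ y ∉ S, A n y = 0 := fun n y hy => by
    have : p y ≤ 0 := not_lt.1 hy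
    simp [hA, cutF_nonpos n this]
  have zB : ∀ n, ∀ y ∉ S, B n y = 0 := fun n y hy => by
    have : p y ≤ 0 := not_lt.1 hy
    simp [hB, cutF_nonpos n this, cutD_nonpos n this]
  have toI : ∀ f : Vec d → ℝ, (∀ y ∉ S, f y = 0) → IntegrableOn f S → Integrable f :=
    fun f hf hi => (integrableOn_iff_integrable_of_support_subset
      (fun y hy => by by_contra h; exact hy (hf y h))).1 hi
  have step : ∀ n, ∫ y in S, A n y = ∫ y in S, B n y := by
    intro n
    rw [setIntegral_eq_integral_of_forall_compl_eq_zero (zA n),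
      setIntegral_eq_integral_of_forall_compl_eq_zero (zB n)]
    have eA : ∀ y, fderiv ℝ (fun y => K (x - y)) y e * (cutF n (p y) * q y) = - A n y := by
      intro y
      rw [(hk y).fderiv]
      simp [hA]
    have eB : ∀ y, K (x - y) * fderiv ℝ (fun y => cutF n (p y) * q y) y e = B n y := by
      intro y
      rw [(hw n y).fderiv]
      simp [hB]
    have key := integral_mul_fderiv_eq_neg_fderiv_mul_of_integrable (μ := (volume : Measure (Vec d)))
      (f := fun y => K (x - y)) (g := fun y => cutF n (p y) * q y) (v := e)
      (by simp only [eA]; exact (toI _ (zA n) (iA n)).neg)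
      (by simp only [eB]; exact (toI _ (zB n) (iB n)))
      (by
        refine toI _ (fun y hy => ?_) ?_
        · have : p y ≤ 0 := not_lt.1 hy
          simp [cutF_nonpos n this]
        · have := cF n
          refine h1.norm.mono' (Continuous.aestronglyMeasurable (by fun_prop))
            (Filter.Eventually.of_forall fun y => ?_)
          have := cutF_abs_le n (p y)
          simp only [norm_mul, Real.norm_eq_abs]
          gcongr
          nlinarith [abs_nonneg (q y)])
      (fun y _ => (hk y).differentiableAt) (fun y _ => (hw n y).differentiableAt)
    simp only [eA, eB, integral_neg, neg_neg] at key
    exact key.symm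
  have lA : Filter.Tendsto (fun n => ∫ y in S, A n y) Filter.atTop
      (nhds (∫ y in S, fderiv ℝ K (x - y) e * q y)) := by
    refine tendsto_integral_of_dominated_convergence _ (fun n => (cA n).aestronglyMeasurable)
      h2.norm (fun n => (ae_restrict_iff' hSm).2 (Filter.Eventually.of_forall fun y hy => bA n y hy))
      ((ae_restrict_iff' hSm).2 (Filter.Eventually.of_forall fun y hy => ?_))
    refine tendsto_const_nhds.congr' ?_
    filter_upwards [cut_eventually hy] with n hn
    simp [hA, hn.1]
  have lB : Filter.Tendsto (fun n => ∫ y in S, B n y) Filter.atTop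
      (nhds (∫ y in S, K (x - y) * fderiv ℝ q y e)) := by
    refine tendsto_integral_of_dominated_convergence _ (fun n => (cB n).aestronglyMeasurable)
      ibd (fun n => (ae_restrict_iff' hSm).2 (Filter.Eventually.of_forall fun y hy => bB n y hy))
      ((ae_restrict_iff' hSm).2 (Filter.Eventually.of_forall fun y hy => ?_))
    refine tendsto_const_nhds.congr' ?_
    filter_upwards [cut_eventually hy] with n hn
    simp [hB, hn.1, hn.2]
  simp only [step] at lA
  exact tendsto_nhds_unique lA lB
lemma dens_integral {d : ℕ} {p : Vec d → ℝ} (hp : Continuous p) (f : Vec d → ℝ) :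
    ∫ y, f y ∂((volume : Measure (Vec d)).withDensity (fun y => ENNReal.ofReal (p y))) =
      ∫ y in {y | 0 < p y}, p y * f y := by
  have hSm : MeasurableSet {y | 0 < p y} := (isOpen_lt continuous_const hp).measurableSet
  rw [integral_withDensity_eq_integral_toReal_smul
    (f := fun y => ENNReal.ofReal (p y)) (ENNReal.measurable_ofReal.comp hp.measurable) (by simp)]
  rw [← setIntegral_eq_integral_of_forall_compl_eq_zero (s := {y | 0 < p y})]
  · refine setIntegral_congr_fun hSm fun y hy => ?_
    have hy' : 0 < p y := hy
    simp [ENNReal.toReal_ofReal hy'.le]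
  · intro y hy
    have : p y ≤ 0 := not_lt.1 hy
    simp [ENNReal.ofReal_of_nonpos this]

lemma dens_integrable {d : ℕ} {p : Vec d → ℝ} (hp : Continuous p) (f : Vec d → ℝ)
    (h : Integrable f ((volume : Measure (Vec d)).withDensity (fun y => ENNReal.ofReal (p y)))) :
    IntegrableOn (fun y => p y * f y) {y | 0 < p y} := by
  have hSm : MeasurableSet {y | 0 < p y} := (isOpen_lt continuous_const hp).measurableSet
  rw [integrable_withDensity_iff_integrable_smul'
    (f := fun y => ENNReal.ofReal (p y)) (ENNReal.measurable_ofReal.comp hp.measurable) (by simp)] at h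
  refine h.integrableOn.congr_fun (fun y hy => ?_) hSm
  have hy' : 0 < p y := hy
  simp [ENNReal.toReal_ofReal hy'.le]

lemma grad_coord {d : ℕ} (f : Vec d → ℝ) (y : Vec d) (i : Fin d) :
    gradient f y i = fderiv ℝ f y (EuclideanSpace.single i 1) := by
  rw [← inner_gradient_left (𝕜 := ℝ), EuclideanSpace.inner_single_right]
  simp

lemma score_coord {d : ℕ} {p : Vec d → ℝ} (hp : ContDiff ℝ 2 p) {y : Vec d} (hy : 0 < p y)
    (i : Fin d) :
    scoreOf p y i = fderiv ℝ p y (EuclideanSpace.single i 1) / p y := by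
  rw [scoreOf, grad_coord, ((hp.differentiable (by norm_num) y).hasFDerivAt.log hy.ne').fderiv]
  simp [div_eq_inv_mul]

lemma hess_log_dens {d : ℕ} {p : Vec d → ℝ} (hp : ContDiff ℝ 2 p) {y : Vec d} (hy : 0 < p y)
    (i j : Fin d) :
    hessEntry (fun z => Real.log (p z)) y i j = hessEntry p y i j / p y -
      fderiv ℝ p y (EuclideanSpace.single i 1) * fderiv ℝ p y (EuclideanSpace.single j 1) /
        (p y) ^ 2 := by
  have h := hess_log (N := p) (N1 := fun z => fderiv ℝ p z (EuclideanSpace.single j 1)) (c := 1)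
    one_ne_zero (x := y) (i := i) (j := j)
    ((hp.continuous.continuousAt.eventually_ne hy.ne'))
    (Filter.Eventually.of_forall fun z => hp.differentiable (by norm_num) z)
    (Filter.Eventually.of_forall fun z => rfl) rfl
    (((hp.fderiv_right (m := 1) (by norm_num)).clm_apply contDiff_const).differentiable
      (by norm_num) y) rfl
  simp only [one_mul] at h
  exact h

lemma gk1_le {d : ℕ} {σ : ℝ} (hσ : 0 < σ) (i : Fin d) (u : Vec d) :
    |gk1 σ i u| ≤ Real.exp (σ ^ 2 / 2) / σ ^ 2 *
      (gk σ (u + σ ^ 2 • EuclideanSpace.single i 1) +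
        gk σ (u - σ ^ 2 • EuclideanSpace.single i 1)) := by
  have hs : 0 < σ ^ 2 := by positivity
  have e1 : gk σ (u + σ ^ 2 • EuclideanSpace.single i 1) =
      gk σ u * (Real.exp (-(u i)) * Real.exp (-(σ ^ 2 / 2))) := by
    simp only [gk, ← Real.exp_add]
    congr 1
    rw [norm_add_sq_real, norm_smul, inner_smul_right, EuclideanSpace.inner_single_right]
    simp
    field_simp
    ring
  have e2 : gk σ (u - σ ^ 2 • EuclideanSpace.single i 1) =
      gk σ u * (Real.exp (u i) * Real.exp (-(σ ^ 2 / 2))) := by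
    simp only [gk, ← Real.exp_add]
    congr 1
    rw [norm_sub_sq_real, norm_smul, inner_smul_right, EuclideanSpace.inner_single_right]
    simp
    field_simp
    ring
  have h0 := gk_pos σ u
  have h1 : |u i| ≤ Real.exp (-(u i)) + Real.exp (u i) := by
    have a1 := Real.add_one_le_exp (u i)
    have a2 := Real.add_one_le_exp (-(u i))
    have a3 := Real.exp_pos (u i)
    have a4 := Real.exp_pos (-(u i))
    rw [abs_le]; constructor <;> linarith
  rw [e1, e2, gk1, abs_mul, abs_neg, abs_div, abs_of_pos h0, abs_of_pos hs]
  have e3 : Real.exp (σ ^ 2 / 2) * Real.exp (-(σ ^ 2 / 2)) = 1 := by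
    rw [← Real.exp_add]; simp
  calc |u i| / σ ^ 2 * gk σ u ≤ (Real.exp (-(u i)) + Real.exp (u i)) / σ ^ 2 * gk σ u := by gcongr
    _ = (Real.exp (σ ^ 2 / 2) * Real.exp (-(σ ^ 2 / 2))) *
        ((Real.exp (-(u i)) + Real.exp (u i)) / σ ^ 2 * gk σ u) := by rw [e3, one_mul]
    _ = _ := by ring

lemma part2 {d : ℕ} (P : Measure (Vec d)) [IsProbabilityMeasure P] {σ : ℝ} (hσ : 0 < σ)
    (p : Vec d → ℝ)
    (hP : P = MeasureTheory.volume.withDensity (fun y => ENNReal.ofReal (p y)))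
    (hp : ContDiff ℝ 2 p)
    (hg : ∀ x : Vec d, Integrable
          (fun y => Real.exp (-‖x - y‖ ^ 2 / (2 * σ ^ 2)) • gradient p y)
          MeasureTheory.volume)
    (hh : ∀ (x : Vec d) (i j : Fin d), Integrable
          (fun y => Real.exp (-‖x - y‖ ^ 2 / (2 * σ ^ 2)) * hessEntry p y i j)
          MeasureTheory.volume)
    (hs : ∀ x : Vec d, Integrable (fun y => ‖scoreOf p y‖ ^ 2) (tiltMeasure d P 1 σ x))
    (hl : ∀ (x : Vec d) (i j : Fin d), Integrable
          (fun y => hessEntry (fun z => Real.log (p z)) y i j) (tiltMeasure d P 1 σ x))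
    (x : Vec d) (i j : Fin d) :
          hessEntry (fun z => Real.log (perturbDensity d P σ z)) x i j =
            (∫ y, hessEntry (fun z => Real.log (p z)) y i j ∂(tiltMeasure d P 1 σ x)) +
              ((∫ y, scoreOf p y i * scoreOf p y j ∂(tiltMeasure d P 1 σ x)) -
                (∫ y, scoreOf p y i ∂(tiltMeasure d P 1 σ x)) *
                  (∫ y, scoreOf p y j ∂(tiltMeasure d P 1 σ x))) := by
  have hpc := hp.continuous
  set S := {y | 0 < p y} with hS
  have hSo : IsOpen S := isOpen_lt continuous_const hpc
  have hSm : MeasurableSet S := hSo.measurableSet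
  have pI : ∀ f : Vec d → ℝ, ∫ y, f y ∂P = ∫ y in S, p y * f y := by
    intro f; rw [hP]; exact dens_integral hpc f
  have pi : ∀ f : Vec d → ℝ, Integrable f P → IntegrableOn (fun y => p y * f y) S := by
    intro f hf; rw [hP] at hf; exact dens_integrable hpc f hf
  have bi : ∀ K : Vec d → ℝ, Continuous K → (∃ C, ∀ u, ‖K u‖ ≤ C) →
      IntegrableOn (fun y => K (x - y) * p y) S := by
    intro K hK hb
    simpa only [mul_comm] using pi _ (integrable_of_bdd P hK hb x)
  have hp1 : ContDiff ℝ 1 p := hp.of_le (by norm_num)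
  have cg : ∀ k, ContDiff ℝ 1 (fun y => fderiv ℝ p y (EuclideanSpace.single k 1)) := fun k =>
    (hp.fderiv_right (m := 1) (by norm_num)).clm_apply contDiff_const
  have ig : ∀ (x : Vec d) k, Integrable (fun y => gk σ (x - y) *
      fderiv ℝ p y (EuclideanSpace.single k 1)) volume := by
    intro x k
    have := (EuclideanSpace.proj (𝕜 := ℝ) (ι := Fin d) k).integrable_comp (hg x)
    refine this.congr (Filter.Eventually.of_forall fun y => ?_)
    simp [gk, grad_coord]
  have ig1 : ∀ k l, Integrable (fun y => gk1 σ k (x - y) *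
      fderiv ℝ p y (EuclideanSpace.single l 1)) volume := by
    intro k l
    have c1 := gk1_continuous σ k
    have c2 := (cg l).continuous
    refine (((ig (x + σ ^ 2 • EuclideanSpace.single k 1) l).norm.fun_add
      (ig (x - σ ^ 2 • EuclideanSpace.single k 1) l).norm).const_mul
        (Real.exp (σ ^ 2 / 2) / σ ^ 2)).mono'
      (Continuous.aestronglyMeasurable (by fun_prop)) (Filter.Eventually.of_forall fun y => ?_)
    have h := gk1_le hσ k (x - y)
    have e1 : x - y + σ ^ 2 • EuclideanSpace.single k 1 =
      x + σ ^ 2 • EuclideanSpace.single k 1 - y := by abel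
    have e2 : x - y - σ ^ 2 • EuclideanSpace.single k 1 =
      x - σ ^ 2 • EuclideanSpace.single k 1 - y := by abel
    rw [e1, e2] at h
    simp only [norm_mul, Real.norm_eq_abs, abs_of_pos (gk_pos _ _)]
    refine (mul_le_mul_of_nonneg_right h (abs_nonneg _)).trans (le_of_eq ?_)
    ring
  have iss : ∀ k l, IntegrableOn (fun y => gk σ (x - y) *
      (fderiv ℝ p y (EuclideanSpace.single k 1) * fderiv ℝ p y (EuclideanSpace.single l 1) / p y))
      S := by
    intro k l
    have h := pi _ (tilt_integrable P σ x _ (hs x))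
    refine h.mono' ?_ ((ae_restrict_iff' hSm).2 (Filter.Eventually.of_forall fun y hy => ?_))
    · refine ContinuousOn.aestronglyMeasurable ?_ hSm
      have c0 := gk_continuous (d := d) σ
      have c1 := (cg k).continuous
      have c2 := (cg l).continuous
      refine ContinuousOn.mul (by fun_prop) (ContinuousOn.div (by fun_prop) hpc.continuousOn ?_)
      intro y hy
      exact (show 0 < p y from hy).ne'
    · have hy' : 0 < p y := hy
      have s1 := score_coord hp hy' k
      have s2 := score_coord hp hy' l
      have e : gk σ (x - y) * (fderiv ℝ p y (EuclideanSpace.single k 1) *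
          fderiv ℝ p y (EuclideanSpace.single l 1) / p y) =
          p y * (scoreOf p y k * scoreOf p y l * gk σ (x - y)) := by
        rw [s1, s2]; field_simp
      have g0 := gk_pos σ (x - y)
      rw [e, norm_mul, norm_mul, norm_mul, Real.norm_eq_abs, Real.norm_eq_abs, Real.norm_eq_abs,
        Real.norm_eq_abs, abs_of_pos hy', abs_of_pos g0, sq]
      gcongr
      · exact coord_le _ _
      · exact coord_le _ _
  have J1 : ∀ k, ∫ y in S, gk1 σ k (x - y) * p y =
      ∫ y in S, gk σ (x - y) * fderiv ℝ p y (EuclideanSpace.single k 1) := by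
    intro k
    have h := ibp (gk_contDiff σ) hp1 hp1 x (EuclideanSpace.single k 1)
      (bi _ (gk_continuous σ) (gk_bdd σ))
      (by simp only [gk_fderiv hσ]; exact bi _ (gk1_continuous σ k) (gk1_bdd hσ k))
      (ig x k).integrableOn
      ((ig x k).integrableOn.congr_fun (fun y hy => by
        have : p y ≠ 0 := (show 0 < p y from hy).ne'
        field_simp) hSm)
    simpa only [gk_fderiv hσ] using h
  have J2 : ∫ y in S, gk2 σ i j (x - y) * p y =
      ∫ y in S, gk1 σ i (x - y) * fderiv ℝ p y (EuclideanSpace.single j 1) := by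
    have h := ibp (gk1_contDiff σ i) hp1 hp1 x (EuclideanSpace.single j 1)
      (bi _ (gk1_continuous σ i) (gk1_bdd hσ i))
      (by simp only [gk1_fderiv hσ]; exact bi _ (gk2_continuous σ i j) (gk2_bdd hσ i j))
      (ig1 i j).integrableOn
      ((ig1 i j).integrableOn.congr_fun (fun y hy => by
        have : p y ≠ 0 := (show 0 < p y from hy).ne'
        field_simp) hSm)
    simpa only [gk1_fderiv hσ] using h
  have J3 : ∫ y in S, gk1 σ i (x - y) * fderiv ℝ p y (EuclideanSpace.single j 1) =
      ∫ y in S, gk σ (x - y) * hessEntry p y i j := by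
    have h := ibp (gk_contDiff σ) hp1 (cg j) x (EuclideanSpace.single i 1)
      (ig x j).integrableOn
      (by simp only [gk_fderiv hσ]; exact (ig1 i j).integrableOn)
      (hh x i j).integrableOn (iss j i)
    simp only [gk_fderiv hσ] at h
    exact h
  have N1 : ∀ k, ∫ y, gk1 σ k (x - y) ∂P = ∫ y, scoreOf p y k * gk σ (x - y) ∂P := by
    intro k
    rw [pI, pI]
    simp only [mul_comm (p _) (gk1 _ _ _)]
    rw [J1]
    refine setIntegral_congr_fun hSm fun y hy => ?_
    have hy' : 0 < p y := hy
    simp only [score_coord hp hy']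
    field_simp
  have N2 : ∫ y, gk2 σ i j (x - y) ∂P =
      (∫ y, hessEntry (fun z => Real.log (p z)) y i j * gk σ (x - y) ∂P) +
      ∫ y, scoreOf p y i * scoreOf p y j * gk σ (x - y) ∂P := by
    rw [pI, pI, pI]
    simp only [mul_comm (p _) (gk2 _ _ _ _)]
    rw [J2, J3, ← integral_add (pi _ (tilt_integrable P σ x _ (hl x i j)))]
    · refine setIntegral_congr_fun hSm fun y hy => ?_
      have hy' : 0 < p y := hy
      simp only [score_coord hp hy', hess_log_dens hp hy']
      field_simp
      ring
    · refine (iss i j).congr_fun (fun y hy => ?_) hSm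
      have hy' : 0 < p y := hy
      simp only [score_coord hp hy']
      field_simp
  rw [hess_perturb P hσ, tilt_integral, tilt_integral, tilt_integral, tilt_integral, N1, N1, N2]
  have := (N_pos P σ x).ne'
  field_simp
  ring


/-- Lemma `computing-second-score`: two representations of the Hessian
`∇²log p_σ` of a Gaussian perturbation, stated entrywise, via the tilted measure
`P̃_σ(·|x)`. -/
theorem statement18 :
    ∀ (d : ℕ) (σ : ℝ) (P : Measure (Vec d)),
      IsProbabilityMeasure P → 0 < σ →
      -- (1) `∇²log p_σ(x) = Var_{P̃}(y/σ²) − I_d/σ²`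
      (∀ (x : Vec d) (i j : Fin d),
        hessEntry (fun z => Real.log (perturbDensity d P σ z)) x i j =
          ((∫ y, (y i / σ ^ 2) * (y j / σ ^ 2) ∂(tiltMeasure d P 1 σ x)) -
              (∫ y, y i / σ ^ 2 ∂(tiltMeasure d P 1 σ x)) *
                (∫ y, y j / σ ^ 2 ∂(tiltMeasure d P 1 σ x))) -
            (if i = j then 1 else 0) / σ ^ 2) ∧
      -- (2) if `P` has a `C²` density `p` with the integration by parts justified, then
      -- `∇²log p_σ(x) = E_{P̃}[∇²log p] + Var_{P̃}(∇log p)`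
      (∀ p : Vec d → ℝ,
        P = MeasureTheory.volume.withDensity (fun y => ENNReal.ofReal (p y)) →
        ContDiff ℝ 2 p →
        (∀ x : Vec d, Integrable
          (fun y => Real.exp (-‖x - y‖ ^ 2 / (2 * σ ^ 2)) • gradient p y)
          MeasureTheory.volume) →
        (∀ (x : Vec d) (i j : Fin d), Integrable
          (fun y => Real.exp (-‖x - y‖ ^ 2 / (2 * σ ^ 2)) * hessEntry p y i j)
          MeasureTheory.volume) →
        (∀ x : Vec d, Integrable (fun y => ‖scoreOf p y‖ ^ 2) (tiltMeasure d P 1 σ x)) →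
        (∀ (x : Vec d) (i j : Fin d), Integrable
          (fun y => hessEntry (fun z => Real.log (p z)) y i j) (tiltMeasure d P 1 σ x)) →
        ∀ (x : Vec d) (i j : Fin d),
          hessEntry (fun z => Real.log (perturbDensity d P σ z)) x i j =
            (∫ y, hessEntry (fun z => Real.log (p z)) y i j ∂(tiltMeasure d P 1 σ x)) +
              ((∫ y, scoreOf p y i * scoreOf p y j ∂(tiltMeasure d P 1 σ x)) -
                (∫ y, scoreOf p y i ∂(tiltMeasure d P 1 σ x)) *
                  (∫ y, scoreOf p y j ∂(tiltMeasure d P 1 σ x)))) := by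
  intro d σ P hP hσ
  exact ⟨fun x i j => part1 P hσ x i j,
    fun p h1 h2 h3 h4 h5 h6 x i j => part2 P hσ p h1 h2 h3 h4 h5 h6 x i j⟩

end DiffusionKL
end
end

section
/- There is a universal constant C > 0 such that the following holds. Let P be a probability measure on ℝ^d, σ > 0, and let p_σ be the density of the Gaussian perturbation of P with variance σ². Then for every integer p ≥ 1, E_{X∼p_σ}‖∇log p_σ(X)‖^p ≤ (C·p·d/σ²)^{p/2}; equivalently, the sub-Gaussian (ψ₂-Orlicz) norm of the random variable ‖∇log p_σ(X)‖ is at most C·√(d/σ²). -/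
open MeasureTheory Real

noncomputable section

namespace DiffusionKL

/-- The Gaussian weight. -/
def wt (d : ℕ) (σ : ℝ) (x y : Vec d) : ℝ := Real.exp (-‖x - y‖ ^ 2 / (2 * σ ^ 2))

lemma wt_pos (d : ℕ) (σ : ℝ) (x y : Vec d) : 0 < wt d σ x y := Real.exp_pos _

lemma wt_cont (d : ℕ) (σ : ℝ) (x : Vec d) : Continuous (wt d σ x) := by
  unfold wt; fun_prop

lemma wt_le_one (d : ℕ) (σ : ℝ) (x y : Vec d) : wt d σ x y ≤ 1 := by
  unfold wt
  rw [Real.exp_le_one_iff]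
  apply div_nonpos_of_nonpos_of_nonneg
  · have := sq_nonneg ‖x - y‖
    linarith
  · positivity

lemma wt_int (d : ℕ) (σ : ℝ) (x : Vec d) (P : Measure (Vec d)) [IsProbabilityMeasure P] :
    Integrable (wt d σ x) P := by
  refine Integrable.of_bound (wt_cont d σ x).aestronglyMeasurable 1 ?_
  filter_upwards with y
  rw [Real.norm_of_nonneg (wt_pos ..).le]
  exact wt_le_one ..

lemma wt_norm_le (d : ℕ) {σ : ℝ} (hσ : 0 < σ) (x y : Vec d) :
    wt d σ x y * ‖x - y‖ ≤ σ := by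
  unfold wt
  set r := ‖x - y‖
  have h1 := Real.add_one_le_exp (r ^ 2 / (2 * σ ^ 2))
  have h2 : r / σ ≤ r ^ 2 / (2 * σ ^ 2) + 1 := by
    have e : r ^ 2 / (2 * σ ^ 2) = (r / σ) ^ 2 / 2 := by field_simp
    rw [e]
    nlinarith [sq_nonneg (r / σ - 1)]
  have h3 : r ≤ σ * Real.exp (r ^ 2 / (2 * σ ^ 2)) := by
    have := h2.trans h1
    rw [div_le_iff₀ hσ] at this
    linarith
  rw [neg_div, Real.exp_neg, inv_mul_le_iff₀ (Real.exp_pos _)]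
  linarith

lemma wt_fderiv (d : ℕ) {σ : ℝ} (hσ : 0 < σ) (x y : Vec d) :
    HasFDerivAt (fun x => wt d σ x y)
      ((-(wt d σ x y / σ ^ 2)) • innerSL ℝ (x - y)) x := by
  have h0 : HasFDerivAt (fun x : Vec d => x - y) (ContinuousLinearMap.id ℝ (Vec d)) x :=
    (hasFDerivAt_id x).sub_const y
  have h1 := h0.norm_sq
  have h2 : HasFDerivAt (fun x : Vec d => -‖x - y‖ ^ 2 / (2 * σ ^ 2)) _ x :=
    (h1.const_mul (-(1 / (2 * σ ^ 2)))).congr_of_eventuallyEq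
      (Filter.Eventually.of_forall fun z => by simp only []; ring)
  have h3 := h2.exp
  unfold wt
  refine h3.congr_fderiv ?_
  ext v
  simp
  field_simp

lemma score_inner (d : ℕ) {σ : ℝ} (hσ : 0 < σ) (P : Measure (Vec d)) [IsProbabilityMeasure P]
    (x v : Vec d) :
    inner ℝ (scoreOf (perturbDensity d P σ) x) v * (∫ y, wt d σ x y ∂P) =
      ∫ y, (-(wt d σ x y / σ ^ 2)) * inner ℝ (x - y) v ∂P := by
  have hF'c : Continuous fun y => (-(wt d σ x y / σ ^ 2)) • innerSL ℝ (x - y) := by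
    have := wt_cont d σ x
    fun_prop
  have hb : ∀ x y : Vec d, ‖(-(wt d σ x y / σ ^ 2)) • innerSL ℝ (x - y)‖ ≤ 1 / σ := by
    intro x y
    rw [norm_smul, innerSL_apply_norm, norm_neg, Real.norm_of_nonneg
      (div_nonneg (wt_pos ..).le (sq_nonneg σ))]
    have := wt_norm_le d hσ x y
    rw [div_mul_eq_mul_div, div_le_div_iff₀ (by positivity) hσ]
    nlinarith
  have hF'i : Integrable (fun y => (-(wt d σ x y / σ ^ 2)) • innerSL ℝ (x - y)) P :=
    Integrable.of_bound hF'c.aestronglyMeasurable (1 / σ) (Filter.Eventually.of_forall (hb x))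
  have hD : HasFDerivAt (fun x => ∫ y, wt d σ x y ∂P)
      (∫ y, (-(wt d σ x y / σ ^ 2)) • innerSL ℝ (x - y) ∂P) x := by
    refine hasFDerivAt_integral_of_dominated_of_fderiv_le (s := Set.univ)
      (F' := fun x y => (-(wt d σ x y / σ ^ 2)) • innerSL ℝ (x - y))
      (bound := fun _ => 1 / σ) Filter.univ_mem ?_ (wt_int d σ x P)
      hF'c.aestronglyMeasurable ?_ (integrable_const _) ?_
    · exact Filter.Eventually.of_forall fun z => (wt_cont d σ z).aestronglyMeasurable
    · exact Filter.Eventually.of_forall fun y z _ => hb z y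
    · exact Filter.Eventually.of_forall fun y z _ => wt_fderiv d hσ z y
  have hpos : 0 < ∫ y, wt d σ x y ∂P := by
    rw [integral_pos_iff_support_of_nonneg (fun y => (wt_pos d σ x y).le) (wt_int d σ x P)]
    have : Function.support (wt d σ x) = Set.univ := by
      ext y; simp [(wt_pos d σ x y).ne']
    rw [this]; simp
  have hc : 0 < (2 * π * σ ^ 2) ^ (-(d : ℝ) / 2) := by positivity
  have hp := (hD.const_mul ((2 * π * σ ^ 2) ^ (-(d : ℝ) / 2))).log (mul_pos hc hpos).ne'
  have hg : fderiv ℝ (fun z => Real.log (perturbDensity d P σ z)) x = _ := hp.fderiv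
  unfold scoreOf gradient
  rw [InnerProductSpace.toDual_symm_apply, hg]
  simp only [smul_apply, smul_eq_mul]
  rw [ContinuousLinearMap.integral_apply hF'i]
  simp only [smul_apply, smul_eq_mul, innerSL_apply_apply]
  field_simp

lemma jensen (d : ℕ) {σ κ : ℝ} (hσ : 0 < σ) (hκ : 0 ≤ κ) (hκ' : κ ≤ 1 / 4)
    (P : Measure (Vec d)) [IsProbabilityMeasure P] (x : Vec d) :
    Real.exp (κ * σ ^ 2 * ‖scoreOf (perturbDensity d P σ) x‖ ^ 2) * (∫ y, wt d σ x y ∂P) ≤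
      ∫ y, wt d σ x y * Real.exp (κ * ‖x - y‖ ^ 2 / σ ^ 2) ∂P := by
  have hs := score_inner d hσ P x (scoreOf (perturbDensity d P σ) x)
  set s := scoreOf (perturbDensity d P σ) x
  have hw := wt_cont d σ x
  have hi1 : Integrable (fun y => (-(wt d σ x y / σ ^ 2)) * inner ℝ (x - y) s) P := by
    refine Integrable.of_bound (Continuous.aestronglyMeasurable (by fun_prop)) (‖s‖ / σ) ?_
    filter_upwards with y
    rw [norm_mul, norm_neg, Real.norm_of_nonneg (div_nonneg (wt_pos ..).le (sq_nonneg σ))]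
    have h1 := wt_norm_le d hσ x y
    have h2 : ‖inner ℝ (x - y) s‖ ≤ ‖x - y‖ * ‖s‖ := norm_inner_le_norm _ _
    calc _ ≤ wt d σ x y / σ ^ 2 * (‖x - y‖ * ‖s‖) :=
          mul_le_mul_of_nonneg_left h2 (div_nonneg (wt_pos ..).le (sq_nonneg σ))
      _ = (wt d σ x y * ‖x - y‖) * (‖s‖ / σ ^ 2) := by ring
      _ ≤ σ * (‖s‖ / σ ^ 2) := by gcongr
      _ = _ := by field_simp
  have hi2 : Integrable (fun y => wt d σ x y * Real.exp (κ * ‖x - y‖ ^ 2 / σ ^ 2)) P := by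
    refine Integrable.of_bound (Continuous.aestronglyMeasurable (by fun_prop)) 1 ?_
    filter_upwards with y
    rw [Real.norm_of_nonneg (mul_pos (wt_pos ..) (Real.exp_pos _)).le, wt, ← Real.exp_add,
      Real.exp_le_one_iff]
    have : -‖x - y‖ ^ 2 / (2 * σ ^ 2) + κ * ‖x - y‖ ^ 2 / σ ^ 2
      = - ((1 / 2 - κ) * (‖x - y‖ ^ 2 / σ ^ 2)) := by field_simp; ring
    rw [this]
    have : 0 ≤ (1 / 2 - κ) * (‖x - y‖ ^ 2 / σ ^ 2) := mul_nonneg (by linarith) (by positivity)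
    linarith
  set E := Real.exp (κ * σ ^ 2 * ‖s‖ ^ 2) with hE
  have key : ∀ y, E * ((1 - 2 * κ * σ ^ 2 * ‖s‖ ^ 2) * wt d σ x y +
      2 * κ * σ ^ 2 * ((-(wt d σ x y / σ ^ 2)) * inner ℝ (x - y) s)) ≤
      wt d σ x y * Real.exp (κ * ‖x - y‖ ^ 2 / σ ^ 2) := by
    intro y
    have h1 := Real.add_one_le_exp (κ * ‖x - y‖ ^ 2 / σ ^ 2 - κ * σ ^ 2 * ‖s‖ ^ 2)
    have h2 : Real.exp (κ * ‖x - y‖ ^ 2 / σ ^ 2) =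
        E * Real.exp (κ * ‖x - y‖ ^ 2 / σ ^ 2 - κ * σ ^ 2 * ‖s‖ ^ 2) := by
      rw [hE, ← Real.exp_add]; congr 1; ring
    have h3 : 0 ≤ ‖x - y‖ ^ 2 / σ ^ 2 + 2 * inner ℝ (x - y) s + σ ^ 2 * ‖s‖ ^ 2 := by
      have h4 := sq_nonneg ‖(x - y) + σ ^ 2 • s‖
      rw [norm_add_sq_real, inner_smul_right, norm_smul, Real.norm_of_nonneg (sq_nonneg σ)] at h4
      have : ‖x - y‖ ^ 2 / σ ^ 2 + 2 * inner ℝ (x - y) s + σ ^ 2 * ‖s‖ ^ 2 =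
        (‖x - y‖ ^ 2 + 2 * (σ ^ 2 * inner ℝ (x - y) s) + (σ ^ 2 * ‖s‖) ^ 2) / σ ^ 2 := by
        field_simp
      rw [this]; positivity
    have h5 : (1 - 2 * κ * σ ^ 2 * ‖s‖ ^ 2) + 2 * κ * (- inner ℝ (x - y) s) ≤
        Real.exp (κ * ‖x - y‖ ^ 2 / σ ^ 2 - κ * σ ^ 2 * ‖s‖ ^ 2) := by
      refine le_trans ?_ h1
      have := mul_nonneg hκ h3
      have e : κ * ‖x - y‖ ^ 2 / σ ^ 2 = κ * (‖x - y‖ ^ 2 / σ ^ 2) := by ring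
      rw [e]
      linarith
    rw [h2]
    have h6 := mul_le_mul_of_nonneg_left h5
      (mul_pos (Real.exp_pos (κ * σ ^ 2 * ‖s‖ ^ 2)) (wt_pos d σ x y)).le
    rw [← hE] at h6
    calc _ = E * wt d σ x y * ((1 - 2 * κ * σ ^ 2 * ‖s‖ ^ 2) + 2 * κ * (- inner ℝ (x - y) s)) := by
          field_simp
      _ ≤ _ := h6
      _ = _ := by ring
  have hi3 : Integrable (fun y => (1 - 2 * κ * σ ^ 2 * ‖s‖ ^ 2) * wt d σ x y) P :=
    (wt_int d σ x P).const_mul _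
  have hi4 := hi1.const_mul (2 * κ * σ ^ 2)
  have := integral_mono ((hi3.add hi4).const_mul E) hi2 key
  refine le_trans (le_of_eq ?_) this
  simp only [Pi.add_apply]
  rw [integral_const_mul, integral_add hi3 hi4, integral_const_mul, integral_const_mul, ← hs,
    real_inner_self_eq_norm_sq]
  ring

lemma lint_scale (d : ℕ) {σ : ℝ} (hσ : 0 < σ) (y : Vec d) (g : Vec d → ENNReal)
    (hg : Measurable g) :
    ∫⁻ z, g (y + σ • z) = ENNReal.ofReal |(σ ^ d)⁻¹| * ∫⁻ x, g x := by
  have h1 : ∫⁻ x, g (y + x) ∂(Measure.map (fun z : Vec d => σ • z) volume) =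
      ∫⁻ z, g (y + σ • z) := by
    rw [lintegral_map (by fun_prop) (by fun_prop)]
  rw [← h1, Measure.map_addHaar_smul _ hσ.ne', lintegral_smul_measure,
    lintegral_add_left_eq_self]
  simp

/-- integration against the law -/
lemma lint_law (d : ℕ) (σ : ℝ) (P : Measure (Vec d)) [IsProbabilityMeasure P]
    (g : Vec d → ENNReal) (hg : Measurable g) :
    ∫⁻ x, g x ∂(perturbLaw d P σ) = ∫⁻ y, (∫⁻ z,
      ENNReal.ofReal ((2 * π) ^ (-(d : ℝ) / 2) * Real.exp (-‖z‖ ^ 2 / 2)) * g (y + σ • z)) ∂P := by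
  unfold perturbLaw
  have hm : Measurable (fun z : Vec d =>
    ENNReal.ofReal ((2 * π) ^ (-(d : ℝ) / 2) * Real.exp (-‖z‖ ^ 2 / 2))) := by fun_prop
  rw [lintegral_map hg (by fun_prop), lintegral_prod _ (by fun_prop)]
  congr 1; ext y
  rw [lintegral_withDensity_eq_lintegral_mul _ hm (by fun_prop)]
  rfl

lemma gauss_lint (d : ℕ) {κ : ℝ} (hκ' : κ ≤ 1 / 4) :
    ∫⁻ z : Vec d, ENNReal.ofReal ((2 * π) ^ (-(d : ℝ) / 2) * Real.exp (-‖z‖ ^ 2 / 2)) *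
      ENNReal.ofReal (Real.exp (κ * ‖z‖ ^ 2)) =
    ENNReal.ofReal ((1 - 2 * κ) ^ (-(d : ℝ) / 2)) := by
  have hb : 0 < 1 / 2 - κ := by linarith
  have hc : 0 < (2 * π) ^ (-(d : ℝ) / 2) := by positivity
  have h1 : ∀ z : Vec d, ENNReal.ofReal ((2 * π) ^ (-(d : ℝ) / 2) * Real.exp (-‖z‖ ^ 2 / 2)) *
      ENNReal.ofReal (Real.exp (κ * ‖z‖ ^ 2)) =
      ENNReal.ofReal ((2 * π) ^ (-(d : ℝ) / 2) * Real.exp (-(1 / 2 - κ) * ‖z‖ ^ 2)) := by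
    intro z
    rw [← ENNReal.ofReal_mul (by positivity), mul_assoc, ← Real.exp_add]
    congr 3; ring
  simp_rw [h1]
  have hI := GaussianFourier.integral_rexp_neg_mul_sq_norm (V := Vec d) hb
  have hint : Integrable (fun v : Vec d => Real.exp (-(1 / 2 - κ) * ‖v‖ ^ 2)) := by
    by_contra h
    rw [integral_undef h] at hI
    have : 0 < (π / (1 / 2 - κ)) ^ (Module.finrank ℝ (Vec d) / 2 : ℝ) := by positivity
    linarith
  rw [← ofReal_integral_eq_lintegral_ofReal (hint.const_mul _)
    (Filter.Eventually.of_forall fun z => by positivity), integral_const_mul, hI]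
  congr 1
  rw [finrank_euclideanSpace_fin, neg_div, Real.rpow_neg (by positivity),
    Real.rpow_neg (by linarith), ← Real.inv_rpow (by positivity), ← Real.inv_rpow (by linarith),
    ← Real.mul_rpow (by positivity) (by positivity)]
  congr 1
  have : 1 - 2 * κ ≠ 0 := by linarith
  field_simp

lemma tonelli_aux {α β : Type*} [MeasurableSpace α] [MeasurableSpace β] (μ : Measure α)
    (P : Measure β) [SFinite μ] [SFinite P] (W V : α → β → ENNReal)
    (hWm : Measurable (fun q : α × β => W q.1 q.2))
    (hVm : Measurable (fun q : α × β => V q.1 q.2))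
    (hD0 : ∀ x, ∫⁻ y, W x y ∂P ≠ 0) (hDtop : ∀ x, ∫⁻ y, W x y ∂P ≠ ⊤) :
    ∫⁻ y, (∫⁻ x, W x y * ((∫⁻ y, W x y * V x y ∂P) / (∫⁻ y, W x y ∂P)) ∂μ) ∂P =
      ∫⁻ y, (∫⁻ x, W x y * V x y ∂μ) ∂P := by
  have hDm : Measurable (fun x => ∫⁻ y, W x y ∂P) := hWm.lintegral_prod_right'
  have hNm : Measurable (fun x => ∫⁻ y, W x y * V x y ∂P) :=
    (hWm.mul hVm).lintegral_prod_right'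
  have hQm : Measurable (fun x => (∫⁻ y, W x y * V x y ∂P) / (∫⁻ y, W x y ∂P)) := hNm.div hDm
  rw [lintegral_lintegral_swap]
  rotate_left
  · exact ((hWm.comp measurable_swap).mul (hQm.comp measurable_snd)).aemeasurable
  have h2 : ∫⁻ y, (∫⁻ x, W x y * V x y ∂μ) ∂P = ∫⁻ x, (∫⁻ y, W x y * V x y ∂P) ∂μ :=
    lintegral_lintegral_swap ((hWm.mul hVm).comp measurable_swap).aemeasurable
  rw [h2]
  refine lintegral_congr fun x => ?_
  rw [lintegral_mul_const _ (show Measurable (fun y => W x y) from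
          hWm.comp measurable_prodMk_left)]
  exact ENNReal.mul_div_cancel (hD0 x) (hDtop x)

lemma wt_lint_eq (d : ℕ) (σ : ℝ) (P : Measure (Vec d)) [IsProbabilityMeasure P] (x : Vec d) :
    ∫⁻ y, ENNReal.ofReal (wt d σ x y) ∂P = ENNReal.ofReal (∫ y, wt d σ x y ∂P) :=
  (ofReal_integral_eq_lintegral_ofReal (wt_int d σ x P)
      (Filter.Eventually.of_forall fun y => (wt_pos d σ x y).le)).symm

lemma wt_lint_top (d : ℕ) (σ : ℝ) (P : Measure (Vec d)) [IsProbabilityMeasure P] (x : Vec d) :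
    ∫⁻ y, ENNReal.ofReal (wt d σ x y) ∂P ≠ ⊤ := by
  rw [wt_lint_eq]; exact ENNReal.ofReal_ne_top

lemma wt_lint_zero (d : ℕ) (σ : ℝ) (P : Measure (Vec d)) [IsProbabilityMeasure P] (x : Vec d) :
    ∫⁻ y, ENNReal.ofReal (wt d σ x y) ∂P ≠ 0 := by
  intro h
  have : 0 < ∫ y, wt d σ x y ∂P := by
    rw [integral_pos_iff_support_of_nonneg (fun y => (wt_pos d σ x y).le) (wt_int d σ x P)]
    have : Function.support (wt d σ x) = Set.univ := by
      ext y; simp [(wt_pos d σ x y).ne']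
    rw [this]; simp
  rw [wt_lint_eq, ENNReal.ofReal_eq_zero] at h
  linarith

lemma jensen_lint (d : ℕ) {σ κ : ℝ} (hσ : 0 < σ) (hκ : 0 ≤ κ) (hκ' : κ ≤ 1 / 4)
    (P : Measure (Vec d)) [IsProbabilityMeasure P] (x : Vec d) :
    ENNReal.ofReal (Real.exp (κ * σ ^ 2 * ‖scoreOf (perturbDensity d P σ) x‖ ^ 2)) ≤
      (∫⁻ y, ENNReal.ofReal (wt d σ x y) *
        ENNReal.ofReal (Real.exp (κ * ‖x - y‖ ^ 2 / σ ^ 2)) ∂P) /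
      (∫⁻ y, ENNReal.ofReal (wt d σ x y) ∂P) := by
  rw [ENNReal.le_div_iff_mul_le (Or.inl (wt_lint_zero d σ P x)) (Or.inl (wt_lint_top d σ P x)),
    wt_lint_eq, ← ENNReal.ofReal_mul (Real.exp_pos _).le]
  refine (ENNReal.ofReal_le_ofReal (jensen d hσ hκ hκ' P x)).trans ?_
  have h1 : ∀ y, ENNReal.ofReal (wt d σ x y) *
        ENNReal.ofReal (Real.exp (κ * ‖x - y‖ ^ 2 / σ ^ 2)) = ENNReal.ofReal
      (wt d σ x y * Real.exp (κ * ‖x - y‖ ^ 2 / σ ^ 2)) := fun y =>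
    (ENNReal.ofReal_mul (wt_pos ..).le).symm
  simp_rw [h1]
  have hn : ∀ y, 0 ≤ wt d σ x y * Real.exp (κ * ‖x - y‖ ^ 2 / σ ^ 2) := fun y =>
    (mul_pos (wt_pos ..) (Real.exp_pos _)).le
  have hcont : Continuous fun y => wt d σ x y * Real.exp (κ * ‖x - y‖ ^ 2 / σ ^ 2) := by
    have := wt_cont d σ x
    fun_prop
  rw [integral_eq_lintegral_of_nonneg_ae (Filter.Eventually.of_forall hn)
    hcont.aestronglyMeasurable]
  exact ENNReal.ofReal_toReal_le

lemma change_var (d : ℕ) {σ : ℝ} (hσ : 0 < σ) (y : Vec d) (G : Vec d → ENNReal)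
    (hG : Measurable G) :
    ∫⁻ z, ENNReal.ofReal ((2 * π) ^ (-(d : ℝ) / 2) * Real.exp (-‖z‖ ^ 2 / 2)) * G (y + σ • z) =
    ENNReal.ofReal ((2 * π) ^ (-(d : ℝ) / 2)) * (ENNReal.ofReal |(σ ^ d)⁻¹| *
      ∫⁻ x, ENNReal.ofReal (wt d σ x y) * G x) := by
  have hWy : Measurable (fun x => ENNReal.ofReal (wt d σ x y)) := by simp only [wt]; fun_prop
  rw [← lint_scale d hσ y (fun x => ENNReal.ofReal (wt d σ x y) * G x) (hWy.mul hG),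
    ← lintegral_const_mul' _ _ ENNReal.ofReal_ne_top]
  refine lintegral_congr fun z => ?_
  have h1 : wt d σ (y + σ • z) y = Real.exp (-‖z‖ ^ 2 / 2) := by
    rw [wt, add_sub_cancel_left, norm_smul, Real.norm_of_nonneg hσ.le]
    congr 1
    field_simp
  rw [h1, ENNReal.ofReal_mul (by positivity), mul_assoc]

lemma main_abs (d : ℕ) {σ : ℝ} (hσ : 0 < σ) (P : Measure (Vec d)) [IsProbabilityMeasure P]
    (W V : Vec d → Vec d → ENNReal) (hW : ∀ x y, W x y = ENNReal.ofReal (wt d σ x y))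
    (hWm : Measurable (fun q : Vec d × Vec d => W q.1 q.2))
    (hVm : Measurable (fun q : Vec d × Vec d => V q.1 q.2)) :
    ∫⁻ x, (∫⁻ y, W x y * V x y ∂P) / (∫⁻ y, W x y ∂P) ∂(perturbLaw d P σ) =
    ∫⁻ y, (∫⁻ z, ENNReal.ofReal ((2 * π) ^ (-(d : ℝ) / 2) * Real.exp (-‖z‖ ^ 2 / 2)) *
      V (y + σ • z) y) ∂P := by
  have hD0 : ∀ x, ∫⁻ y, W x y ∂P ≠ 0 := fun x => by
    simp_rw [hW]; exact wt_lint_zero d σ P x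
  have hDtop : ∀ x, ∫⁻ y, W x y ∂P ≠ ⊤ := fun x => by
    simp_rw [hW]; exact wt_lint_top d σ P x
  have hDm : Measurable (fun x => ∫⁻ y, W x y ∂P) := hWm.lintegral_prod_right'
  have hNm : Measurable (fun x => ∫⁻ y, W x y * V x y ∂P) :=
    (hWm.mul hVm).lintegral_prod_right'
  have hQm : Measurable (fun x => (∫⁻ y, W x y * V x y ∂P) / (∫⁻ y, W x y ∂P)) := hNm.div hDm
  rw [lint_law d σ P _ hQm]
  have e1 := fun y => change_var d hσ y _ hQm
  have e2 := fun y => change_var d hσ y (fun x => V x y) (hVm.comp measurable_prodMk_right)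
  simp only [← hW] at e1 e2
  rw [lintegral_congr e1, lintegral_congr e2,
    lintegral_const_mul' _ _ ENNReal.ofReal_ne_top,
    lintegral_const_mul' _ _ ENNReal.ofReal_ne_top,
    lintegral_const_mul' _ _ ENNReal.ofReal_ne_top,
    lintegral_const_mul' _ _ ENNReal.ofReal_ne_top,
    tonelli_aux volume P W V hWm hVm hD0 hDtop]

lemma main_lint (d : ℕ) {σ κ : ℝ} (hσ : 0 < σ) (hκ : 0 ≤ κ) (hκ' : κ ≤ 1 / 4)
    (P : Measure (Vec d)) [IsProbabilityMeasure P] :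
    ∫⁻ x, ENNReal.ofReal (Real.exp (κ * σ ^ 2 * ‖scoreOf (perturbDensity d P σ) x‖ ^ 2))
      ∂(perturbLaw d P σ) ≤ ENNReal.ofReal ((1 - 2 * κ) ^ (-(d : ℝ) / 2)) := by
  refine (lintegral_mono (jensen_lint d hσ hκ hκ' P)).trans ?_
  rw [main_abs d hσ P (fun x y => ENNReal.ofReal (wt d σ x y))
    (fun x y => ENNReal.ofReal (Real.exp (κ * ‖x - y‖ ^ 2 / σ ^ 2))) (fun _ _ => rfl)
    (by simp only [wt]; fun_prop) (by fun_prop)]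
  have h : ∀ y z : Vec d, κ * ‖y + σ • z - y‖ ^ 2 / σ ^ 2 = κ * ‖z‖ ^ 2 := by
    intro y z
    rw [add_sub_cancel_left, norm_smul, Real.norm_of_nonneg hσ.le]
    field_simp
  simp_rw [h, gauss_lint d hκ']
  rw [lintegral_const, measure_univ, mul_one]

lemma integral_le_of_lint {α : Type*} [MeasurableSpace α] (μ : Measure α) (f : α → ℝ)
    (hf : ∀ x, 0 ≤ f x) {B : ℝ} (hB : 0 ≤ B) (h : ∫⁻ x, ENNReal.ofReal (f x) ∂μ ≤ ENNReal.ofReal B) :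
    ∫ x, f x ∂μ ≤ B := by
  by_cases hi : Integrable f μ
  · rw [integral_eq_lintegral_of_nonneg_ae (Filter.Eventually.of_forall hf) hi.1]
    exact ENNReal.toReal_le_of_le_ofReal hB h
  · rw [integral_undef hi]; exact hB

lemma const_bound (d : ℕ) (hd : 1 ≤ d) :
    (1 - 2 * (1 / (4 * (d : ℝ)))) ^ (-(d : ℝ) / 2) ≤ 2 := by
  have hd' : (1 : ℝ) ≤ d := by exact_mod_cast hd
  have h0 : 2 * (1 / (4 * (d : ℝ))) = 1 / (2 * d) := by field_simp; norm_num
  have h1 : 1 / (2 * (d : ℝ)) ≤ 1 / 2 := by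
    apply one_div_le_one_div_of_le <;> linarith
  rw [h0]
  set a := 1 - 1 / (2 * (d : ℝ)) with ha
  have ha0 : 1 / 2 ≤ a := by linarith
  have hb : 1 / 2 ≤ a ^ d := by
    have := one_add_mul_le_pow (a := -(1 / (2 * (d : ℝ)))) (by linarith) d
    have e : 1 + (d : ℝ) * -(1 / (2 * (d : ℝ))) = 1 / 2 := by field_simp; norm_num
    rw [e] at this
    rwa [← sub_eq_add_neg, ← ha] at this
  have h2 : a ^ (-(d : ℝ)) ≤ 2 := by
    rw [Real.rpow_neg (by linarith), Real.rpow_natCast]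
    rw [inv_le_comm₀ (by linarith) (by norm_num)]
    linarith
  refine le_trans ?_ h2
  apply Real.rpow_le_rpow_of_exponent_ge (by linarith)
  · rw [ha]
    have : 0 < 1 / (2 * (d : ℝ)) := by positivity
    linarith
  · linarith

lemma pow_le_exp (d p : ℕ) (hd : 1 ≤ d) (hp : 1 ≤ p) {σ u : ℝ} (hσ : 0 < σ) (hu : 0 ≤ u) :
    u ^ p ≤ (2 * p * d / σ ^ 2) ^ ((p : ℝ) / 2) *
      Real.exp (1 / (4 * (d : ℝ)) * σ ^ 2 * u ^ 2) := by
  have hd' : (1 : ℝ) ≤ d := by exact_mod_cast hd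
  have hp' : (1 : ℝ) ≤ p := by exact_mod_cast hp
  set v := 1 / (4 * (d : ℝ)) * σ ^ 2 * u ^ 2 with hv
  have hv0 : 0 ≤ v := by positivity
  have h1 : v / (p / 2) ≤ Real.exp (v / (p / 2)) := by
    have := Real.add_one_le_exp (v / (p / 2)); linarith
  have h2 := Real.rpow_le_rpow (by positivity) h1 (show (0 : ℝ) ≤ p / 2 by positivity)
  rw [← Real.exp_mul, div_mul_cancel₀ _ (by positivity)] at h2
  have h3 : u ^ p = (u ^ 2) ^ ((p : ℝ) / 2) := by
    rw [← Real.rpow_natCast u 2, ← Real.rpow_mul hu, ← Real.rpow_natCast u p]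
    congr 1; push_cast; ring
  have h4 : u ^ 2 = (2 * p * d / σ ^ 2) * (v / (p / 2)) := by
    rw [hv]; field_simp; norm_num
  rw [h3]
  nth_rewrite 1 [h4]
  rw [Real.mul_rpow (by positivity) (by positivity)]
  exact mul_le_mul_of_nonneg_left h2 (by positivity)

/-- Lemma `score-sub`: sub-Gaussian bound on the norm of the score of a
Gaussian perturbation. -/
theorem statement19 :
    ∃ C : ℝ, 0 < C ∧
      ∀ (d : ℕ) (σ : ℝ) (P : Measure (Vec d)),
        IsProbabilityMeasure P → 0 < σ →
        (∀ p : ℕ, 1 ≤ p →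
          (∫ x, ‖scoreOf (perturbDensity d P σ) x‖ ^ p ∂(perturbLaw d P σ)) ≤
            (C * p * d / σ ^ 2) ^ ((p : ℝ) / 2)) ∧
        psi2Norm (perturbLaw d P σ) (fun x => ‖scoreOf (perturbDensity d P σ) x‖) ≤
          C * Real.sqrt (d / σ ^ 2) := by
  refine ⟨8, by norm_num, ?_⟩
  intro d σ P hP hσ
  rcases Nat.eq_zero_or_pos d with hd | hd
  · subst hd
    have hs : ∀ x, ‖scoreOf (perturbDensity 0 P σ) x‖ = 0 := fun x => by
      rw [Subsingleton.elim (scoreOf (perturbDensity 0 P σ) x) 0, norm_zero]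
    refine ⟨fun p hp => ?_, ?_⟩
    · have h0 : p ≠ 0 := by omega
      simp only [hs, zero_pow h0, integral_zero]
      positivity
    · have hL := main_lint 0 hσ le_rfl (by norm_num : (0 : ℝ) ≤ 1 / 4) P
      have hI := integral_le_of_lint _ _ (fun x => (Real.exp_pos _).le) (by positivity) hL
      simp only [psi2Norm, hs]
      have hset : {t : ℝ | 0 < t ∧ ∫ x, Real.exp ((0 : ℝ) ^ 2 / t ^ 2) ∂(perturbLaw 0 P σ) ≤ 2}
          = Set.Ioi 0 := by
        ext t
        simp only [Set.mem_ofPred_eq, Set.mem_Ioi, and_iff_left_iff_imp]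
        intro _
        simp at hI ⊢
        linarith
      rw [hset, csInf_Ioi]
      positivity
  · have hd' : (1 : ℝ) ≤ d := by exact_mod_cast hd
    have hκ' : 1 / (4 * (d : ℝ)) ≤ 1 / 4 := by
      apply one_div_le_one_div_of_le <;> linarith
    have hL := main_lint d hσ (by positivity : 0 ≤ 1 / (4 * (d : ℝ))) hκ' P
    have hL2 := hL.trans (ENNReal.ofReal_le_ofReal (const_bound d hd))
    refine ⟨fun p hp => ?_, ?_⟩
    · have hp' : (1 : ℝ) ≤ p := by exact_mod_cast hp
      have hB : 0 ≤ (2 * p * d / σ ^ 2) ^ ((p : ℝ) / 2) := by positivity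
      have h1 : ∫ x, ‖scoreOf (perturbDensity d P σ) x‖ ^ p ∂(perturbLaw d P σ) ≤
          (2 * p * d / σ ^ 2) ^ ((p : ℝ) / 2) * 2 := by
        refine integral_le_of_lint _ _ (fun x => by positivity) (by positivity) ?_
        rw [ENNReal.ofReal_mul hB]
        refine le_trans ?_ (mul_le_mul_right hL2 _)
        rw [← lintegral_const_mul' _ _ ENNReal.ofReal_ne_top]
        refine lintegral_mono fun x => ?_
        rw [← ENNReal.ofReal_mul hB]
        exact ENNReal.ofReal_le_ofReal (pow_le_exp d p hd hp hσ (norm_nonneg _))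
      refine h1.trans ?_
      have h2 : (8 * p * d / σ ^ 2 : ℝ) = (2 * p * d / σ ^ 2) * 4 := by ring
      rw [h2, Real.mul_rpow (by positivity) (by norm_num)]
      refine mul_le_mul_of_nonneg_left ?_ hB
      have h4 : (4 : ℝ) = 2 ^ (2 : ℝ) := by norm_num
      rw [h4, ← Real.rpow_mul (by norm_num)]
      calc (2 : ℝ) = 2 ^ (1 : ℝ) := by norm_num
        _ ≤ _ := Real.rpow_le_rpow_of_exponent_le (by norm_num) (by linarith)
    · have ht : 0 < 2 * Real.sqrt (d / σ ^ 2) := by positivity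
      refine le_trans (csInf_le ⟨0, fun t ht => ht.1.le⟩
        (show 2 * Real.sqrt (d / σ ^ 2) ∈ _ from ⟨ht, ?_⟩)) (by linarith)
      refine integral_le_of_lint _ _ (fun x => (Real.exp_pos _).le) (by norm_num) ?_
      refine le_trans (le_of_eq ?_) hL2
      congr 1; ext x
      congr 2
      rw [mul_pow, Real.sq_sqrt (by positivity)]
      field_simp
      norm_num

end DiffusionKL
end
end
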